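/- For every forward XPath qualifier u over element types Σ and attribute names Σ', there exists an ATRA₁ 𝒜_u with alphabet Σ ∪ Σ' that is finitely equivalent to u: for every finite XML tree τ over Σ and Σ' and every Σ-labelled node n of τ, we have τ, n ⊨ u if and only if 𝒜_u accepts (i.e., has a final run on) the subtree of τ rooted at n. Moreover, if u is safety (i.e., every occurrence of ▽, ▽* and ▷* in u lies under an odd number of negations), then 𝒜_u can be chosen to be in addition safety equivalent to u: for every finite or infinite XML tree τ and Σ-labelled node n, τ, n ⊨ u if and only if 𝒜_u safety-accepts the subtree of τ rooted at n. -/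

import Mathlib

/-! ## Trees and data trees -/

abbrev Node : Type := List Bool

/-- A (possibly infinite) data tree over alphabet `A`, with data from `ℕ`.
It is represented by the partial labelling functions on nonleaf nodes:
`label n = some a` iff `n` is a nonleaf node labelled `a`, and similarly
`dlabel` gives the datum at each nonleaf node. -/
structure DataTree (A : Type) where
  label : Node → Option A
  dlabel : Node → Option ℕ
  root_nonleaf : (label []).isSome
  domain_eq : ∀ n : Node, (dlabel n).isSome ↔ (label n).isSome
  tree_cond : ∀ (n : Node) (d : Bool), (label (n ++ [d])).isSome → (label n).isSome

namespace DataTree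
variable {A : Type}

def Nonleaf (τ : DataTree A) (n : Node) : Prop := (τ.label n).isSome

/-- The set of nodes: the root together with both children of every nonleaf node. -/
def Nodes (τ : DataTree A) : Set Node :=
  {n | n = [] ∨ ∃ m d, n = m ++ [d] ∧ τ.Nonleaf m}

def Leaf (τ : DataTree A) (n : Node) : Prop := n ∈ τ.Nodes ∧ ¬ τ.Nonleaf n

def Finite (τ : DataTree A) : Prop := {n | τ.Nonleaf n}.Finite

end DataTree

/-- A (possibly infinite) tree over alphabet `A` (a data tree without data). -/
structure BTree (A : Type) where
  label : Node → Option A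
  root_nonleaf : (label []).isSome
  tree_cond : ∀ (n : Node) (d : Bool), (label (n ++ [d])).isSome → (label n).isSome

namespace BTree
variable {A : Type}
def Nonleaf (t : BTree A) (n : Node) : Prop := (t.label n).isSome
def Nodes (t : BTree A) : Set Node :=
  {n | n = [] ∨ ∃ m d, n = m ++ [d] ∧ t.Nonleaf m}
def Leaf (t : BTree A) (n : Node) : Prop := n ∈ t.Nodes ∧ ¬ t.Nonleaf n
def Finite (t : BTree A) : Prop := {n | t.Nonleaf n}.Finite
end BTree

/-- The underlying tree of a data tree (erasing the data). -/
def DataTree.toTree {A : Type} (τ : DataTree A) : BTree A :=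
  ⟨τ.label, τ.root_nonleaf, τ.tree_cond⟩

/-- `τ` and `τ'` have equal `l`-prefixes: they agree on all nodes of length `< l`
(hence their restrictions to nodes of length `≤ l` coincide). -/
def EqPrefix {A : Type} (τ τ' : DataTree A) (l : ℕ) : Prop :=
  ∀ n : Node, n.length < l → τ.label n = τ'.label n ∧ τ.dlabel n = τ'.dlabel n

open Classical in
/-- The distance between data trees: `0` if they are equal, and otherwise `1/l`
where `l` is least such that the `l`-prefixes are distinct. -/
noncomputable def treeDist {A : Type} (τ τ' : DataTree A) : ℝ :=
  if τ = τ' then 0 else ((sInf {l : ℕ | ¬ EqPrefix τ τ' l} : ℕ) : ℝ)⁻¹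

/-! ## Forward alternating tree 1-register automata (ATRA₁) -/

/-- Positive Boolean formulae over `Q`: atoms `q(d, ↓)` / `q(d, ¬↓)` are
`atom q d true` / `atom q d false`, where `d : Bool` is the direction. -/
inductive PosBool (Q : Type) : Type
  | atom : Q → Bool → Bool → PosBool Q
  | tt : PosBool Q
  | ff : PosBool Q
  | and : PosBool Q → PosBool Q → PosBool Q
  | or : PosBool Q → PosBool Q → PosBool Q

/-- Satisfaction of a positive Boolean formula by a quadruple
`R d u` of subsets of `Q` (`d` = direction, `u = true` means register update `↓`). -/
def PosBool.Sat {Q : Type} (R : Bool → Bool → Set Q) : PosBool Q → Prop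
  | .atom q d u => q ∈ R d u
  | .tt => True
  | .ff => False
  | .and φ ψ => φ.Sat R ∧ ψ.Sat R
  | .or φ ψ => φ.Sat R ∨ ψ.Sat R

/-- The dual of a positive Boolean formula: swaps `⊤`/`⊥` and `∧`/`∨`. -/
def PosBool.dual {Q : Type} : PosBool Q → PosBool Q
  | .atom q d u => .atom q d u
  | .tt => .ff
  | .ff => .tt
  | .and φ ψ => .or φ.dual ψ.dual
  | .or φ ψ => .and φ.dual ψ.dual

def PosBool.map {Q Q' : Type} (f : Q → Q') : PosBool Q → PosBool Q'
  | .atom q d u => .atom (f q) d u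
  | .tt => .tt
  | .ff => .ff
  | .and φ ψ => .and (φ.map f) (ψ.map f)
  | .or φ ψ => .or (φ.map f) (ψ.map f)

/-- A forward alternating tree 1-register automaton. -/
structure ATRA (A : Type) where
  Q : Type
  fin : Finite Q
  qI : Q
  F : Set Q
  δ : Q → A → Bool → PosBool Q

namespace ATRA
variable {A : Type}

/-- The transition relation between configurations (finite sets of threads),
relative to a letter `a` and a datum `E`. -/
def Trans (M : ATRA A) (a : A) (E : ℕ) (G H0 H1 : Set (M.Q × ℕ)) : Prop :=
  ∀ q D, (q, D) ∈ G →
    ∃ R : Bool → Bool → Set M.Q,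
      (M.δ q a (decide (D = E))).Sat R ∧
      ∀ d : Bool,
        (∀ r ∈ R d true, (r, E) ∈ (if d then H1 else H0)) ∧
        (∀ r ∈ R d false, (r, D) ∈ (if d then H1 else H0))

/-- A run of `M` on a data tree `τ`. -/
structure Run (M : ATRA A) (τ : DataTree A) where
  G : Node → Set (M.Q × ℕ)
  finite : ∀ n : Node, (G n).Finite
  support : ∀ n : Node, n ∉ τ.Nodes → G n = ∅
  init : ∃ D : ℕ, τ.dlabel [] = some D ∧ (M.qI, D) ∈ G []
  step : ∀ (n : Node) (a : A) (D : ℕ), τ.label n = some a → τ.dlabel n = some D →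
    M.Trans a D (G n) (G (n ++ [false])) (G (n ++ [true]))

def Run.Final {M : ATRA A} {τ : DataTree A} (ρ : M.Run τ) : Prop :=
  ∀ n, τ.Leaf n → ∀ q D, (q, D) ∈ ρ.G n → q ∈ M.F

def Run.FiniteRun {M : ATRA A} {τ : DataTree A} (ρ : M.Run τ) : Prop :=
  ∃ l : ℕ, ∀ n : Node, l ≤ n.length → ρ.G n = ∅

/-- The language of `M` over finite data trees. -/
def Lfin (M : ATRA A) : Set (DataTree A) :=
  {τ | τ.Finite ∧ ∃ ρ : M.Run τ, ρ.Final}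

/-- The safety language of `M`: data trees on which `M` has a final run. -/
def Lsaf (M : ATRA A) : Set (DataTree A) :=
  {τ | ∃ ρ : M.Run τ, ρ.Final}

/-- The co-safety language of `M`: data trees on which `M` has a final finite run. -/
def Lcos (M : ATRA A) : Set (DataTree A) :=
  {τ | ∃ ρ : M.Run τ, ρ.Final ∧ ρ.FiniteRun}

/-- The dual automaton: final states complemented, transition formulae dualised. -/
def dual (M : ATRA A) : ATRA A :=
  ⟨M.Q, M.fin, M.qI, M.Fᶜ, fun q a b => (M.δ q a b).dual⟩

end ATRA

/-! ## XML trees -/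

section XML
variable {E Att : Type}

def IsAttrNode (τ : DataTree (E ⊕ Att)) (n : Node) : Prop :=
  ∃ a, τ.label n = some (Sum.inr a)

def IsElemNode (τ : DataTree (E ⊕ Att)) (n : Node) : Prop :=
  ∃ e, τ.label n = some (Sum.inl e)

/-- The nodes `n ++ [false]^i` for `1 ≤ i ≤ j` form a chain of attribute nodes. -/
def AttrChain (τ : DataTree (E ⊕ Att)) (n : Node) (j : ℕ) : Prop :=
  1 ≤ j ∧ ∀ i, 1 ≤ i → i ≤ j → IsAttrNode τ (n ++ List.replicate i false)

/-- A data tree over `E ⊕ Att` represents an XML document: each document node is a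
sequence of data-tree nodes (a type node followed by its attribute nodes, chained
by left children, with non-last nodes having a leaf as right child and the
attribute names in a sequence being distinct). -/
structure IsXMLTree (τ : DataTree (E ⊕ Att)) : Prop where
  root_elem : IsElemNode τ []
  attr_left : ∀ n : Node, ¬ IsAttrNode τ (n ++ [true])
  seq_right_leaf : ∀ n : Node, IsAttrNode τ (n ++ [false]) → ¬ τ.Nonleaf (n ++ [true])
  attr_distinct : ∀ n j1 j2, IsElemNode τ n → AttrChain τ n j1 → AttrChain τ n j2 →
    j1 ≠ j2 →
    τ.label (n ++ List.replicate j1 false) ≠ τ.label (n ++ List.replicate j2 false)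

/-- `m` is the last node of the sequence representing the document node `n`. -/
def SeqLast (τ : DataTree (E ⊕ Att)) (n m : Node) : Prop :=
  IsElemNode τ n ∧
  ((m = n ∧ ¬ IsAttrNode τ (n ++ [false])) ∨
   (∃ j, AttrChain τ n j ∧ m = n ++ List.replicate j false ∧
      ¬ IsAttrNode τ (m ++ [false])))

/-- `n'` represents the first child of the document node represented by `n`. -/
def FirstChild (τ : DataTree (E ⊕ Att)) (n n' : Node) : Prop :=
  ∃ m, SeqLast τ n m ∧ n' = m ++ [false] ∧ IsElemNode τ n'

/-- The next-sibling relation `▷` of the represented document. -/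
def NextSib (τ : DataTree (E ⊕ Att)) (n n' : Node) : Prop :=
  ∃ m, SeqLast τ n m ∧ n' = m ++ [true] ∧ IsElemNode τ n'

/-- The child relation `▽` of the represented document. -/
def DocChild (τ : DataTree (E ⊕ Att)) (n n' : Node) : Prop :=
  ∃ n0, FirstChild τ n n0 ∧ Relation.ReflTransGen (NextSib τ) n0 n'

/-- The document node `n` has attribute `a` with value `D`. -/
def AttrVal (τ : DataTree (E ⊕ Att)) (n : Node) (a : Att) (D : ℕ) : Prop :=
  ∃ j, AttrChain τ n j ∧ τ.label (n ++ List.replicate j false) = some (Sum.inr a) ∧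
    τ.dlabel (n ++ List.replicate j false) = some D

end XML

/-- The subtree of a data tree rooted at a nonleaf node `n`. -/
def DataTree.subtree {A : Type} (τ : DataTree A) (n : Node)
    (h : (τ.label n).isSome) : DataTree A where
  label m := τ.label (n ++ m)
  dlabel m := τ.dlabel (n ++ m)
  root_nonleaf := by simpa using h
  domain_eq m := τ.domain_eq (n ++ m)
  tree_cond m d hm := τ.tree_cond (n ++ m) d (by rw [List.append_assoc]; exact hm)

theorem IsElemNode.isSome {E Att : Type} {τ : DataTree (E ⊕ Att)} {n : Node}
    (h : IsElemNode τ n) : (τ.label n).isSome := by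
  obtain ⟨e, he⟩ := h; simp [he]

/-! ## Forward XPath -/

mutual
/-- Forward XPath queries. -/
inductive XQuery (E Att : Type) : Type
  | eps : XQuery E Att                                -- ε
  | child : XQuery E Att                              -- ▽
  | nsib : XQuery E Att                               -- ▷
  | childStar : XQuery E Att                          -- ▽*
  | nsibStar : XQuery E Att                           -- ▷*
  | comp : XQuery E Att → XQuery E Att → XQuery E Att -- p / p
  | union : XQuery E Att → XQuery E Att → XQuery E Att
  | filter : XQuery E Att → XQual E Att → XQuery E Att -- p[u]

/-- In data comparisons `ε/@a'₁ ⋈ p₂/@a'₂`, the query `p₂` is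
`ε`, `▽/p'₂` or `▷/p'₂`. -/
inductive XStart (E Att : Type) : Type
  | eps : XStart E Att
  | down : XQuery E Att → XStart E Att
  | right : XQuery E Att → XStart E Att

/-- Forward XPath qualifiers. -/
inductive XQual (E Att : Type) : Type
  | not : XQual E Att → XQual E Att
  | and : XQual E Att → XQual E Att → XQual E Att
  | intro : XQuery E Att → XQual E Att                -- p?
  | lab : E → XQual E Att                             -- a
  | eqq : Att → XStart E Att → Att → XQual E Att      -- ε/@a'₁ = p₂/@a'₂
  | neq : Att → XStart E Att → Att → XQual E Att      -- ε/@a'₁ ≠ p₂/@a'₂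
end

mutual
/-- Semantics of queries: `QSem τ p n n'` is `τ, n, n' ⊨ p`. -/
def QSem {E Att : Type} (τ : DataTree (E ⊕ Att)) : XQuery E Att → Node → Node → Prop
  | .eps, n, n' => n = n'
  | .child, n, n' => DocChild τ n n'
  | .nsib, n, n' => NextSib τ n n'
  | .childStar, n, n' => Relation.ReflTransGen (DocChild τ) n n'
  | .nsibStar, n, n' => Relation.ReflTransGen (NextSib τ) n n'
  | .comp p q, n, n' => ∃ m, QSem τ p n m ∧ QSem τ q m n'
  | .union p q, n, n' => QSem τ p n n' ∨ QSem τ q n n'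
  | .filter p u, n, n' => QSem τ p n n' ∧ USem τ u n'

def SSem {E Att : Type} (τ : DataTree (E ⊕ Att)) : XStart E Att → Node → Node → Prop
  | .eps, n, n' => n = n'
  | .down p, n, n' => ∃ m, DocChild τ n m ∧ QSem τ p m n'
  | .right p, n, n' => ∃ m, NextSib τ n m ∧ QSem τ p m n'

/-- Semantics of qualifiers: `USem τ u n` is `τ, n ⊨ u`. -/
def USem {E Att : Type} (τ : DataTree (E ⊕ Att)) : XQual E Att → Node → Prop
  | .not u, n => ¬ USem τ u n
  | .and u v, n => USem τ u n ∧ USem τ v n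
  | .intro p, n => ∃ n', QSem τ p n n'
  | .lab e, n => τ.label n = some (Sum.inl e)
  | .eqq a1 p2 a2, n => ∃ D1 D2 n2, AttrVal τ n a1 D1 ∧ SSem τ p2 n n2 ∧
      AttrVal τ n2 a2 D2 ∧ D1 = D2
  | .neq a1 p2 a2, n => ∃ D1 D2 n2, AttrVal τ n a1 D1 ∧ SSem τ p2 n n2 ∧
      AttrVal τ n2 a2 D2 ∧ D1 ≠ D2
end

mutual
/-- `QSafe b p`: every occurrence of `▽`, `▽*`, `▷*` in `p` is under an odd number
of negations, where `b = true` records that `p` itself is under an even number. -/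
def QSafe {E Att : Type} : Bool → XQuery E Att → Prop
  | _, .eps => True
  | b, .child => b = false
  | _, .nsib => True
  | b, .childStar => b = false
  | b, .nsibStar => b = false
  | b, .comp p q => QSafe b p ∧ QSafe b q
  | b, .union p q => QSafe b p ∧ QSafe b q
  | b, .filter p u => QSafe b p ∧ USafe b u

def SSafe {E Att : Type} : Bool → XStart E Att → Prop
  | _, .eps => True
  | b, .down p => b = false ∧ QSafe b p
  | b, .right p => QSafe b p

def USafe {E Att : Type} : Bool → XQual E Att → Prop
  | b, .not u => USafe (!b) u
  | b, .and u v => USafe b u ∧ USafe b v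
  | b, .intro p => QSafe b p
  | _, .lab _ => True
  | b, .eqq _ p2 _ => SSafe b p2
  | b, .neq _ p2 _ => SSafe b p2
end

/-! ## Auxiliary: an intermediate one-register modal language -/

namespace XA

variable {E Att : Type}

/-- Next document node in direction `d`, starting anywhere in an attribute sequence. -/
inductive Nxt (τ : DataTree (E ⊕ Att)) (d : Bool) : Node → Node → Prop
  | here (m : Node) : IsElemNode τ (m ++ [d]) → Nxt τ d m (m ++ [d])
  | skip (m y : Node) : IsAttrNode τ (m ++ [false]) → Nxt τ d (m ++ [false]) y → Nxt τ d m y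

/-- The first node labelled `a` in the attribute sequence starting at `x` carries `D`. -/
inductive AV (τ : DataTree (E ⊕ Att)) (a : Att) : Node → ℕ → Prop
  | here (x : Node) (D : ℕ) : τ.label x = some (Sum.inr a) → τ.dlabel x = some D → AV τ a x D
  | skip (x : Node) (b : Att) (D : ℕ) : τ.label x = some (Sum.inr b) → b ≠ a →
      AV τ a (x ++ [false]) D → AV τ a x D

/-- Intermediate formulae. -/
inductive Form (E Att : Type) : Type
  | tt : Form E Att
  | lab : E → Form E Att
  | not : Form E Att → Form E Att
  | and : Form E Att → Form E Att → Form E Att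
  | nx : Bool → Form E Att → Form E Att
  | star : Bool → Form E Att → Form E Att
  | store : Att → Bool → Form E Att → Form E Att
  | cmp : Att → Bool → Form E Att
  | ecmp : Att → Att → Bool → Form E Att

def Form.or (φ ψ : Form E Att) : Form E Att := .not (.and (.not φ) (.not ψ))

/-- One step of the relation iterated by `star`. -/
def Stp (τ : DataTree (E ⊕ Att)) (two : Bool) (x y : Node) : Prop :=
  Nxt τ true x y ∨ (two = true ∧ Nxt τ false x y)

def Fsem (τ : DataTree (E ⊕ Att)) : Form E Att → Node → ℕ → Prop
  | .tt, _, _ => True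
  | .lab e, n, _ => τ.label n = some (Sum.inl e)
  | .not φ, n, D => ¬ Fsem τ φ n D
  | .and φ ψ, n, D => Fsem τ φ n D ∧ Fsem τ ψ n D
  | .nx d φ, n, D => ∃ y, Nxt τ d n y ∧ Fsem τ φ y D
  | .star two φ, n, D => ∃ y, Relation.ReflTransGen (Stp τ two) n y ∧ Fsem τ φ y D
  | .store a d φ, n, _ => ∃ D' y, AV τ a (n ++ [false]) D' ∧ Nxt τ d n y ∧ Fsem τ φ y D'
  | .cmp a eq, n, D => ∃ D', AV τ a (n ++ [false]) D' ∧ (eq = true ↔ D = D')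
  | .ecmp a b eq, n, _ => ∃ D1 D2, AV τ a (n ++ [false]) D1 ∧ AV τ b (n ++ [false]) D2 ∧
      (eq = true ↔ D1 = D2)

def FSafe : Bool → Form E Att → Prop
  | _, .tt => True
  | _, .lab _ => True
  | b, .not φ => FSafe (!b) φ
  | b, .and φ ψ => FSafe b φ ∧ FSafe b ψ
  | b, .nx _ φ => FSafe b φ
  | b, .star _ φ => b = false ∧ FSafe b φ
  | b, .store _ _ φ => FSafe b φ
  | _, .cmp _ _ => True
  | _, .ecmp _ _ _ => True

theorem Fsem_or (τ : DataTree (E ⊕ Att)) (φ ψ : Form E Att) (n : Node) (D : ℕ) :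
    Fsem τ (φ.or ψ) n D ↔ Fsem τ φ n D ∨ Fsem τ ψ n D := by
  simp only [Form.or, Fsem]; tauto

theorem FSafe_or (b : Bool) (φ ψ : Form E Att) :
    FSafe b (φ.or ψ) ↔ FSafe b φ ∧ FSafe b ψ := by
  simp [Form.or, FSafe]

/-! ### Translation of XPath -/

mutual
def trQ : XQuery E Att → Form E Att → Form E Att
  | .eps, k => k
  | .child, k => .nx false (.star false k)
  | .nsib, k => .nx true k
  | .childStar, k => .or k (.nx false (.star true k))
  | .nsibStar, k => .star false k
  | .comp p q, k => trQ p (trQ q k)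
  | .union p q, k => .or (trQ p k) (trQ q k)
  | .filter p u, k => trQ p (.and (trU u) k)

def trS : XStart E Att → Att → Att → Bool → Form E Att
  | .eps, a, b, eq => .ecmp a b eq
  | .down p, a, b, eq => .store a false (.star false (trQ p (.cmp b eq)))
  | .right p, a, b, eq => .store a true (trQ p (.cmp b eq))

def trU : XQual E Att → Form E Att
  | .not u => .not (trU u)
  | .and u v => .and (trU u) (trU v)
  | .intro p => trQ p .tt
  | .lab e => .lab e
  | .eqq a s b => trS s a b true
  | .neq a s b => trS s a b false
end

mutual
theorem trQ_safe (b : Bool) : ∀ (p : XQuery E Att) (k : Form E Att),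
    QSafe b p → FSafe b k → FSafe b (trQ p k)
  | .eps, k, _, hk => by simpa [trQ] using hk
  | .child, k, h, hk => by simp [trQ, FSafe, QSafe] at *; exact ⟨h, hk⟩
  | .nsib, k, _, hk => by simpa [trQ, FSafe] using hk
  | .childStar, k, h, hk => by simp [trQ, FSafe, QSafe, FSafe_or] at *; exact ⟨hk, h, hk⟩
  | .nsibStar, k, h, hk => by simp [trQ, FSafe, QSafe] at *; exact ⟨h, hk⟩
  | .comp p q, k, h, hk => by
      simp only [QSafe] at h
      simp only [trQ]
      exact trQ_safe b p _ h.1 (trQ_safe b q _ h.2 hk)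
  | .union p q, k, h, hk => by
      simp only [QSafe] at h
      simp only [trQ, FSafe_or]
      exact ⟨trQ_safe b p _ h.1 hk, trQ_safe b q _ h.2 hk⟩
  | .filter p u, k, h, hk => by
      simp only [QSafe] at h
      simp only [trQ]
      exact trQ_safe b p _ h.1 ⟨trU_safe b u h.2, hk⟩

theorem trS_safe (b : Bool) : ∀ (p : XStart E Att) (a a' : Att) (eq : Bool),
    SSafe b p → FSafe b (trS p a a' eq)
  | .eps, _, _, _, _ => by simp [trS, FSafe]
  | .down p, a, a', eq, h => by
      simp only [SSafe] at h
      simp only [trS, FSafe]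
      exact ⟨h.1, trQ_safe b p _ h.2 (by simp [FSafe])⟩
  | .right p, a, a', eq, h => by
      simp only [SSafe] at h
      simp only [trS, FSafe]
      exact trQ_safe b p _ h (by simp [FSafe])

theorem trU_safe (b : Bool) : ∀ (u : XQual E Att), USafe b u → FSafe b (trU u)
  | .not u, h => by
      simp only [USafe] at h
      simp only [trU, FSafe]
      exact trU_safe (!b) u h
  | .and u v, h => by
      simp only [USafe] at h
      simp only [trU, FSafe]
      exact ⟨trU_safe b u h.1, trU_safe b v h.2⟩
  | .intro p, h => by
      simp only [USafe] at h
      simp only [trU]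
      exact trQ_safe b p _ h (by simp [FSafe])
  | .lab e, _ => by simp [trU, FSafe]
  | .eqq a s a', h => by
      simp only [USafe] at h
      simp only [trU]
      exact trS_safe b s _ _ _ h
  | .neq a s a', h => by
      simp only [USafe] at h
      simp only [trU]
      exact trS_safe b s _ _ _ h
end

/-! ### Document relations versus `Nxt`, `AV` -/

theorem not_elem_attr {τ : DataTree (E ⊕ Att)} {n : Node} (h : IsElemNode τ n) :
    ¬ IsAttrNode τ n := by
  rintro ⟨a, ha⟩; obtain ⟨e, he⟩ := h; rw [ha] at he; simp at he

theorem attr_nonleaf {τ : DataTree (E ⊕ Att)} {n : Node} (h : IsAttrNode τ n) :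
    τ.Nonleaf n := by
  obtain ⟨a, ha⟩ := h; simp [DataTree.Nonleaf, ha]

theorem elem_nonleaf {τ : DataTree (E ⊕ Att)} {n : Node} (h : IsElemNode τ n) :
    τ.Nonleaf n := h.isSome

theorem Nxt_elem {τ : DataTree (E ⊕ Att)} {d : Bool} {n y : Node} (h : Nxt τ d n y) :
    IsElemNode τ y := by
  induction h with
  | here m h => exact h
  | skip _ _ _ _ ih => exact ih

theorem Nxt_iff {τ : DataTree (E ⊕ Att)} {d : Bool} {n y : Node} :
    Nxt τ d n y ↔ (IsElemNode τ (n ++ [d]) ∧ y = n ++ [d]) ∨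
      (IsAttrNode τ (n ++ [false]) ∧ Nxt τ d (n ++ [false]) y) := by
  constructor
  · intro h
    rcases h with ⟨_, h⟩ | ⟨_, _, h1, h2⟩
    · exact Or.inl ⟨h, rfl⟩
    · exact Or.inr ⟨h1, h2⟩
  · rintro (⟨h, rfl⟩ | ⟨h1, h2⟩)
    · exact .here _ h
    · exact .skip _ _ h1 h2

theorem not_attr_of_elem {τ : DataTree (E ⊕ Att)} (hτ : IsXMLTree τ) {d : Bool} {n : Node}
    (h : IsElemNode τ (n ++ [d])) : ¬ IsAttrNode τ (n ++ [false]) := by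
  intro ha
  cases d with
  | false => exact not_elem_attr h ha
  | true => exact hτ.seq_right_leaf n ha (elem_nonleaf h)

theorem Nxt_attr {τ : DataTree (E ⊕ Att)} (hτ : IsXMLTree τ) {d : Bool} {n y : Node}
    (h : IsAttrNode τ (n ++ [false])) : Nxt τ d n y ↔ Nxt τ d (n ++ [false]) y := by
  rw [Nxt_iff]
  constructor
  · rintro (⟨h1, _⟩ | h1)
    · exact absurd h (not_attr_of_elem hτ h1)
    · exact h1.2
  · intro h1; exact Or.inr ⟨h, h1⟩

theorem app_rep (n : Node) (j : ℕ) :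
    n ++ List.replicate (j + 1) false = (n ++ [false]) ++ List.replicate j false := by
  simp [List.replicate_succ]

theorem app_rep' (n : Node) (j : ℕ) :
    n ++ List.replicate (j + 1) false = (n ++ List.replicate j false) ++ [false] := by
  simp [List.replicate_succ']

/-- `Nxt` in explicit form. -/
theorem Nxt_exp {τ : DataTree (E ⊕ Att)} (hτ : IsXMLTree τ) {d : Bool} {n y : Node} :
    Nxt τ d n y ↔ ∃ j, (∀ i, 1 ≤ i → i ≤ j → IsAttrNode τ (n ++ List.replicate i false)) ∧
      ¬ IsAttrNode τ ((n ++ List.replicate j false) ++ [false]) ∧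
      y = (n ++ List.replicate j false) ++ [d] ∧ IsElemNode τ y := by
  constructor
  · intro h
    induction h with
    | here m h =>
      refine ⟨0, ?_, ?_, ?_, h⟩
      · intro i h1 h2; omega
      · simpa using not_attr_of_elem hτ h
      · simp
    | skip m y h1 h2 ih =>
      obtain ⟨j, hj, hn, hy, he⟩ := ih
      refine ⟨j + 1, ?_, ?_, ?_, he⟩
      · intro i hi1 hi2
        obtain ⟨i, rfl⟩ : ∃ i', i = i' + 1 := ⟨i - 1, by omega⟩
        rw [app_rep]
        rcases Nat.eq_zero_or_pos i with rfl | hi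
        · simpa using h1
        · exact hj i hi (by omega)
      · rw [app_rep]; exact hn
      · rw [app_rep]; exact hy
  · rintro ⟨j, hj, hn, hy, he⟩
    induction j generalizing n with
    | zero =>
      simp at hy; subst hy
      exact .here _ he
    | succ j ih =>
      refine .skip _ _ ?_ (ih ?_ ?_ ?_)
      · simpa using hj 1 le_rfl (by omega)
      · intro i h1 h2
        rw [← app_rep]; exact hj (i + 1) (by omega) (by omega)
      · rw [← app_rep]; exact hn
      · rw [← app_rep]; exact hy

theorem seqlast_iff {τ : DataTree (E ⊕ Att)} (hτ : IsXMLTree τ) {d : Bool} {n y : Node}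
    (hn : IsElemNode τ n) :
    (∃ m, SeqLast τ n m ∧ y = m ++ [d] ∧ IsElemNode τ y) ↔ Nxt τ d n y := by
  rw [Nxt_exp hτ]
  constructor
  · rintro ⟨m, ⟨_, (⟨rfl, h⟩ | ⟨j, hj, rfl, h⟩)⟩, hy, he⟩
    · exact ⟨0, by intro i h1 h2; omega, by simpa using h, by simpa using hy, he⟩
    · exact ⟨j, hj.2, h, hy, he⟩
  · rintro ⟨j, hj, h, hy, he⟩
    refine ⟨n ++ List.replicate j false, ⟨hn, ?_⟩, hy, he⟩
    rcases Nat.eq_zero_or_pos j with rfl | hpos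
    · left; simpa using h
    · right; exact ⟨j, ⟨hpos, hj⟩, rfl, h⟩

theorem firstChild_iff {τ : DataTree (E ⊕ Att)} (hτ : IsXMLTree τ) {n y : Node}
    (hn : IsElemNode τ n) : FirstChild τ n y ↔ Nxt τ false n y := seqlast_iff hτ hn

theorem nextSib_iff {τ : DataTree (E ⊕ Att)} (hτ : IsXMLTree τ) {n y : Node}
    (hn : IsElemNode τ n) : NextSib τ n y ↔ Nxt τ true n y := seqlast_iff hτ hn

theorem Stp_elem {τ : DataTree (E ⊕ Att)} {two : Bool} {n y : Node} (h : Stp τ two n y) :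
    IsElemNode τ y := by
  rcases h with h | ⟨_, h⟩ <;> exact Nxt_elem h

theorem nsibStar_iff {τ : DataTree (E ⊕ Att)} (hτ : IsXMLTree τ) {n y : Node}
    (hn : IsElemNode τ n) :
    Relation.ReflTransGen (NextSib τ) n y ↔ Relation.ReflTransGen (Stp τ false) n y := by
  constructor
  · intro h
    induction h using Relation.ReflTransGen.head_induction_on with
    | refl => exact .refl
    | head h1 _ ih =>
      have h2 := (nextSib_iff hτ hn).1 h1
      exact .head (Or.inl h2) (ih (Nxt_elem h2))
  · intro h
    induction h using Relation.ReflTransGen.head_induction_on with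
    | refl => exact .refl
    | @head a c h1 _ ih =>
      have h2 : Nxt τ true a c := by simpa [Stp] using h1
      exact .head ((nextSib_iff hτ hn).2 h2) (ih (Nxt_elem h2))

theorem docChild_iff {τ : DataTree (E ⊕ Att)} (hτ : IsXMLTree τ) {n y : Node}
    (hn : IsElemNode τ n) :
    DocChild τ n y ↔ ∃ m, Nxt τ false n m ∧ Relation.ReflTransGen (Stp τ false) m y := by
  unfold DocChild
  constructor
  · rintro ⟨m, h1, h2⟩
    have h1 := (firstChild_iff hτ hn).1 h1
    exact ⟨m, h1, (nsibStar_iff hτ (Nxt_elem h1)).1 h2⟩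
  · rintro ⟨m, h1, h2⟩
    exact ⟨m, (firstChild_iff hτ hn).2 h1, (nsibStar_iff hτ (Nxt_elem h1)).2 h2⟩

theorem rtg_elem {τ : DataTree (E ⊕ Att)} {two : Bool} {n y : Node} (hn : IsElemNode τ n)
    (h : Relation.ReflTransGen (Stp τ two) n y) : IsElemNode τ y := by
  cases h with
  | refl => exact hn
  | tail _ h => exact Stp_elem h

theorem docChild_elem {τ : DataTree (E ⊕ Att)} (hτ : IsXMLTree τ) {n y : Node}
    (hn : IsElemNode τ n) (h : DocChild τ n y) : IsElemNode τ y := by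
  obtain ⟨m, h1, h2⟩ := (docChild_iff hτ hn).1 h
  exact rtg_elem (Nxt_elem h1) h2

theorem childStar_iff {τ : DataTree (E ⊕ Att)} (hτ : IsXMLTree τ) {n y : Node}
    (hn : IsElemNode τ n) :
    Relation.ReflTransGen (DocChild τ) n y ↔
      n = y ∨ ∃ m, Nxt τ false n m ∧ Relation.ReflTransGen (Stp τ true) m y := by
  constructor
  · intro h
    induction h using Relation.ReflTransGen.head_induction_on with
    | refl => exact Or.inl rfl
    | @head n c h1 _ ih =>
      right
      have hc := docChild_elem hτ hn h1
      obtain ⟨m, h2, h3⟩ := (docChild_iff hτ hn).1 h1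
      have h3 : Relation.ReflTransGen (Stp τ true) m c :=
        Relation.ReflTransGen.mono (r := Stp τ false) (fun a b h => by
          rcases h with h | h
          · exact Or.inl h
          · simp at h) _ _ h3
      refine ⟨m, h2, ?_⟩
      rcases ih hc with rfl | ⟨m', h4, h5⟩
      · exact h3
      · exact h3.trans (.head (Or.inr ⟨rfl, h4⟩) h5)
  · rintro (rfl | ⟨m, h1, h2⟩)
    · exact .refl
    · have key : ∀ x, IsElemNode τ x → DocChild τ x m → Relation.ReflTransGen (DocChild τ) x y := by
        clear h1
        induction h2 using Relation.ReflTransGen.head_induction_on with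
        | refl => intro x _ hx; exact .single hx
        | @head a c h1 _ ih =>
          intro x hex hx
          have hea := docChild_elem hτ hex hx
          rcases h1 with h1 | ⟨_, h1⟩
          · refine ih x hex ?_
            obtain ⟨n0, ha, hb⟩ := hx
            exact ⟨n0, ha, hb.tail ((nextSib_iff hτ hea).2 h1)⟩
          · exact .head hx (ih a hea ((docChild_iff hτ hea).2 ⟨c, h1, .refl⟩))
      exact key n hn ((docChild_iff hτ hn).2 ⟨m, h1, .refl⟩)

theorem AV_attr {τ : DataTree (E ⊕ Att)} {a : Att} {x : Node} {D : ℕ} (h : AV τ a x D) :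
    IsAttrNode τ x := by
  rcases h with ⟨_, _, h, _⟩ | ⟨_, _, _, h, _⟩
  · exact ⟨_, h⟩
  · exact ⟨_, h⟩

theorem AV_fun {τ : DataTree (E ⊕ Att)} {a : Att} {x : Node} {D D' : ℕ} (h : AV τ a x D)
    (h' : AV τ a x D') : D = D' := by
  induction h with
  | here x D h1 h2 =>
    rcases h' with ⟨_, _, h3, h4⟩ | ⟨_, b, _, h3, h4, h5⟩
    · rw [h2] at h4; simpa using h4
    · rw [h1] at h3; simp at h3; exact absurd h3.symm h4
  | skip x b D h1 h2 h3 ih =>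
    rcases h' with ⟨_, _, h4, h5⟩ | ⟨_, b', _, h4, h5, h6⟩
    · rw [h1] at h4; simp at h4; exact absurd h4 h2
    · exact ih h6

theorem attrVal_iff {τ : DataTree (E ⊕ Att)} (hτ : IsXMLTree τ) {n : Node} {a : Att} {D : ℕ}
    (hn : IsElemNode τ n) : AttrVal τ n a D ↔ AV τ a (n ++ [false]) D := by
  constructor
  · rintro ⟨j, hj, hl, hd⟩
    have key : ∀ i, i < j → AV τ a (n ++ List.replicate (j - i) false) D := by
      intro i
      induction i with
      | zero => intro _; exact .here _ _ (by simpa using hl) (by simpa using hd)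
      | succ i ih =>
        intro hi
        obtain ⟨b, hb⟩ := hj.2 (j - (i+1)) (by omega) (by omega)
        refine .skip _ b _ hb ?_ ?_
        · rintro rfl
          refine hτ.attr_distinct n (j - (i+1)) j hn ⟨by omega, ?_⟩ hj (by omega) (hb.trans hl.symm)
          intro i' h1 h2; exact hj.2 i' h1 (by omega)
        · rw [← app_rep', show j - (i + 1) + 1 = j - i by omega]
          exact ih (by omega)
    have := key (j - 1) (by have := hj.1; omega)
    rw [show j - (j - 1) = 1 by have := hj.1; omega] at this
    simpa using this
  · intro h
    have key : ∀ x, AV τ a x D → ∃ j, (∀ i ≤ j, IsAttrNode τ (x ++ List.replicate i false)) ∧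
        τ.label (x ++ List.replicate j false) = some (Sum.inr a) ∧
        τ.dlabel (x ++ List.replicate j false) = some D := by
      intro x hx
      induction hx with
      | here x D h1 h2 =>
        exact ⟨0, by intro i hi; simp at hi; subst hi; simpa using ⟨a, h1⟩, by simpa using h1, by simpa using h2⟩
      | skip x b D h1 h2 h3 ih =>
        obtain ⟨j, hj, hl, hd⟩ := ih h
        refine ⟨j + 1, ?_, by rw [app_rep]; exact hl, by rw [app_rep]; exact hd⟩
        intro i hi
        cases i with
        | zero => simpa using ⟨b, h1⟩
        | succ i => rw [app_rep]; exact hj i (by omega)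
    obtain ⟨j, hj, hl, hd⟩ := key _ h
    refine ⟨j + 1, ⟨by omega, ?_⟩, by rw [app_rep]; exact hl, by rw [app_rep]; exact hd⟩
    intro i h1 h2
    obtain ⟨i, rfl⟩ : ∃ i', i = i' + 1 := ⟨i - 1, by omega⟩
    rw [app_rep]; exact hj i (by omega)

theorem QSem_elem {τ : DataTree (E ⊕ Att)} (hτ : IsXMLTree τ) : ∀ (p : XQuery E Att) {n y : Node},
    IsElemNode τ n → QSem τ p n y → IsElemNode τ y
  | .eps, n, y, hn, h => by simp only [QSem] at h; exact h ▸ hn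
  | .child, n, y, hn, h => by simp only [QSem] at h; exact docChild_elem hτ hn h
  | .nsib, n, y, hn, h => by
      simp only [QSem] at h; exact Nxt_elem ((nextSib_iff hτ hn).1 h)
  | .childStar, n, y, hn, h => by
      simp only [QSem] at h
      rcases (childStar_iff hτ hn).1 h with rfl | ⟨m, h1, h2⟩
      · exact hn
      · exact rtg_elem (Nxt_elem h1) h2
  | .nsibStar, n, y, hn, h => by
      simp only [QSem] at h; exact rtg_elem hn ((nsibStar_iff hτ hn).1 h)
  | .comp p q, n, y, hn, h => by
      simp only [QSem] at h
      obtain ⟨m, h1, h2⟩ := h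
      exact QSem_elem hτ q (QSem_elem hτ p hn h1) h2
  | .union p q, n, y, hn, h => by
      simp only [QSem] at h
      rcases h with h | h
      · exact QSem_elem hτ p hn h
      · exact QSem_elem hτ q hn h
  | .filter p u, n, y, hn, h => by
      simp only [QSem] at h
      exact QSem_elem hτ p hn h.1

mutual
theorem trQ_sem {τ : DataTree (E ⊕ Att)} (hτ : IsXMLTree τ) :
    ∀ (p : XQuery E Att) (k : Form E Att) (n : Node) (D : ℕ), IsElemNode τ n →
    (Fsem τ (trQ p k) n D ↔ ∃ y, QSem τ p n y ∧ Fsem τ k y D)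
  | .eps, k, n, D, hn => by simp [trQ, QSem]
  | .child, k, n, D, hn => by
      simp only [trQ, QSem, Fsem, docChild_iff hτ hn]
      constructor
      · rintro ⟨m, h1, y, h2, h3⟩; exact ⟨y, ⟨m, h1, h2⟩, h3⟩
      · rintro ⟨y, ⟨m, h1, h2⟩, h3⟩; exact ⟨m, h1, y, h2, h3⟩
  | .nsib, k, n, D, hn => by simp only [trQ, QSem, Fsem, nextSib_iff hτ hn]
  | .childStar, k, n, D, hn => by
      simp only [trQ, QSem, Fsem_or, Fsem, childStar_iff hτ hn]
      constructor
      · rintro (h | ⟨m, h1, y, h2, h3⟩)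
        · exact ⟨n, Or.inl rfl, h⟩
        · exact ⟨y, Or.inr ⟨m, h1, h2⟩, h3⟩
      · rintro ⟨y, (rfl | ⟨m, h1, h2⟩), h3⟩
        · exact Or.inl h3
        · exact Or.inr ⟨m, h1, y, h2, h3⟩
  | .nsibStar, k, n, D, hn => by simp only [trQ, QSem, Fsem, nsibStar_iff hτ hn]
  | .comp p q, k, n, D, hn => by
      simp only [trQ, QSem]
      rw [trQ_sem hτ p _ n D hn]
      constructor
      · rintro ⟨m, h1, h2⟩
        obtain ⟨y, h3, h4⟩ := (trQ_sem hτ q k m D (QSem_elem hτ p hn h1)).1 h2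
        exact ⟨y, ⟨m, h1, h3⟩, h4⟩
      · rintro ⟨y, ⟨m, h1, h3⟩, h4⟩
        exact ⟨m, h1, (trQ_sem hτ q k m D (QSem_elem hτ p hn h1)).2 ⟨y, h3, h4⟩⟩
  | .union p q, k, n, D, hn => by
      simp only [trQ, QSem, Fsem_or]
      rw [trQ_sem hτ p k n D hn, trQ_sem hτ q k n D hn, ← exists_or]
      simp only [or_and_right]
  | .filter p u, k, n, D, hn => by
      simp only [trQ, QSem]
      rw [trQ_sem hτ p _ n D hn]
      constructor
      · rintro ⟨m, h1, h2, h3⟩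
        exact ⟨m, ⟨h1, (trU_sem hτ u m D (QSem_elem hτ p hn h1)).1 h2⟩, h3⟩
      · rintro ⟨m, ⟨h1, h2⟩, h3⟩
        exact ⟨m, h1, (trU_sem hτ u m D (QSem_elem hτ p hn h1)).2 h2, h3⟩

theorem trS_sem {τ : DataTree (E ⊕ Att)} (hτ : IsXMLTree τ) :
    ∀ (s : XStart E Att) (a b : Att) (eq : Bool) (n : Node) (D : ℕ), IsElemNode τ n →
    (Fsem τ (trS s a b eq) n D ↔ ∃ D1 D2 n2, AttrVal τ n a D1 ∧ SSem τ s n n2 ∧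
      AttrVal τ n2 b D2 ∧ (eq = true ↔ D1 = D2))
  | .eps, a, b, eq, n, D, hn => by
      simp only [trS, SSem, Fsem]
      constructor
      · rintro ⟨D1, D2, h1, h2, h3⟩
        exact ⟨D1, D2, n, (attrVal_iff hτ hn).2 h1, rfl, (attrVal_iff hτ hn).2 h2, h3⟩
      · rintro ⟨D1, D2, _, h1, rfl, h2, h3⟩
        exact ⟨D1, D2, (attrVal_iff hτ hn).1 h1, (attrVal_iff hτ hn).1 h2, h3⟩
  | .down p, a, b, eq, n, D, hn => by
      simp only [trS, SSem, Fsem]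
      constructor
      · rintro ⟨D1, m, h1, h2, y, h3, h4⟩
        have hy := rtg_elem (Nxt_elem h2) h3
        obtain ⟨z, h5, D2, h6, h7⟩ := (trQ_sem hτ p _ y D1 hy).1 h4
        exact ⟨D1, D2, z, (attrVal_iff hτ hn).2 h1, ⟨y, (docChild_iff hτ hn).2 ⟨m, h2, h3⟩, h5⟩,
          (attrVal_iff hτ (QSem_elem hτ p hy h5)).2 h6, h7⟩
      · rintro ⟨D1, D2, z, h1, ⟨y, h2, h5⟩, h6, h7⟩
        obtain ⟨m, h2, h3⟩ := (docChild_iff hτ hn).1 h2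
        have hy := rtg_elem (Nxt_elem h2) h3
        exact ⟨D1, m, (attrVal_iff hτ hn).1 h1, h2, y, h3, (trQ_sem hτ p _ y D1 hy).2
          ⟨z, h5, D2, (attrVal_iff hτ (QSem_elem hτ p hy h5)).1 h6, h7⟩⟩
  | .right p, a, b, eq, n, D, hn => by
      simp only [trS, SSem, Fsem]
      constructor
      · rintro ⟨D1, y, h1, h2, h4⟩
        have hy := Nxt_elem h2
        obtain ⟨z, h5, D2, h6, h7⟩ := (trQ_sem hτ p _ y D1 hy).1 h4
        exact ⟨D1, D2, z, (attrVal_iff hτ hn).2 h1, ⟨y, (nextSib_iff hτ hn).2 h2, h5⟩,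
          (attrVal_iff hτ (QSem_elem hτ p hy h5)).2 h6, h7⟩
      · rintro ⟨D1, D2, z, h1, ⟨y, h2, h5⟩, h6, h7⟩
        have h2 := (nextSib_iff hτ hn).1 h2
        have hy := Nxt_elem h2
        exact ⟨D1, y, (attrVal_iff hτ hn).1 h1, h2, (trQ_sem hτ p _ y D1 hy).2
          ⟨z, h5, D2, (attrVal_iff hτ (QSem_elem hτ p hy h5)).1 h6, h7⟩⟩

theorem trU_sem {τ : DataTree (E ⊕ Att)} (hτ : IsXMLTree τ) :
    ∀ (u : XQual E Att) (n : Node) (D : ℕ), IsElemNode τ n →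
    (Fsem τ (trU u) n D ↔ USem τ u n)
  | .not u, n, D, hn => by simp only [trU, USem, Fsem, trU_sem hτ u n D hn]
  | .and u v, n, D, hn => by
      simp only [trU, USem, Fsem, trU_sem hτ u n D hn, trU_sem hτ v n D hn]
  | .intro p, n, D, hn => by
      simp only [trU, USem, trQ_sem hτ p _ n D hn, Fsem, and_true]
  | .lab e, n, D, hn => by simp only [trU, USem, Fsem]
  | .eqq a s b, n, D, hn => by
      simp only [trU, USem, trS_sem hτ s a b true n D hn, true_iff]
  | .neq a s b, n, D, hn => by
      simp only [trU, USem, trS_sem hτ s a b false n D hn, Bool.false_eq_true, false_iff, ne_eq]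
end

/-! ### Boolean formulae over unpolarised states -/

/-- Unpolarised automaton states. -/
inductive St (E Att : Type) : Type
  | loc : Form E Att → St E Att
  | w : Bool → Form E Att → St E Att
  | st : Att → Bool → Form E Att → St E Att
  | find : Att → Bool → St E Att
  | ef : Att → Att → Bool → St E Att

inductive BF (S : Type) : Type
  | atom : S → Bool → Bool → BF S
  | tt : BF S
  | not : BF S → BF S
  | and : BF S → BF S → BF S

def BF.or {S : Type} (f g : BF S) : BF S := .not (.and (.not f) (.not g))
def BF.bool {S : Type} (b : Bool) : BF S := if b then .tt else .not .tt

def BF.sat {S : Type} (T : S → Bool → Bool → Prop) : BF S → Prop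
  | .atom s d u => T s d u
  | .tt => True
  | .not f => ¬ f.sat T
  | .and f g => f.sat T ∧ g.sat T

def BF.psat {S : Type} (W : S → Bool → Bool → Bool → Prop) : Bool → BF S → Prop
  | pol, .atom s d u => W s pol d u
  | pol, .tt => pol = true
  | pol, .not f => f.psat W (!pol)
  | true, .and f g => f.psat W true ∧ g.psat W true
  | false, .and f g => f.psat W false ∨ g.psat W false

def BF.atoms {S : Type} : BF S → Set S
  | .atom s _ _ => {s}
  | .tt => ∅
  | .not f => f.atoms
  | .and f g => f.atoms ∪ g.atoms

def BF.compile {S Q : Type} (ret : S → Q) : Bool → BF S → PosBool (Q × Bool)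
  | pol, .atom s d u => .atom (ret s, pol) d u
  | true, .tt => .tt
  | false, .tt => .ff
  | pol, .not f => f.compile ret (!pol)
  | true, .and f g => .and (f.compile ret true) (g.compile ret true)
  | false, .and f g => .or (f.compile ret false) (g.compile ret false)

theorem BF.compile_sat {S Q : Type} (ret : S → Q) (R : Bool → Bool → Set (Q × Bool)) (f : BF S) :
    ∀ pol, (f.compile ret pol).Sat R ↔ f.psat (fun s pol d u => (ret s, pol) ∈ R d u) pol := by
  induction f with
  | atom s d u => intro pol; cases pol <;> simp [compile, psat, PosBool.Sat]
  | tt => intro pol; cases pol <;> simp [compile, psat, PosBool.Sat]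
  | not f ih => intro pol; cases pol <;> simp [compile, psat, ih]
  | and f g ih1 ih2 => intro pol; cases pol <;> simp [compile, psat, PosBool.Sat, ih1, ih2]

theorem BF.psat_mono {S : Type} {W W' : S → Bool → Bool → Bool → Prop} (f : BF S)
    (h : ∀ s ∈ f.atoms, ∀ pol d u, W s pol d u → W' s pol d u) :
    ∀ pol, f.psat W pol → f.psat W' pol := by
  induction f with
  | atom s d u => intro pol; simpa [psat] using h s (by simp [atoms]) pol d u
  | tt => intro pol; simp [psat]
  | not f ih => intro pol; simpa [psat] using ih h (!pol)
  | and f g ih1 ih2 =>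
    have ih1 := ih1 (fun s hs => h s (Or.inl hs))
    have ih2 := ih2 (fun s hs => h s (Or.inr hs))
    intro pol
    cases pol with
    | true => exact fun hh => ⟨ih1 _ hh.1, ih2 _ hh.2⟩
    | false => exact fun hh => hh.imp (ih1 _) (ih2 _)

theorem BF.psat_T {S : Type} (T : S → Bool → Bool → Prop) (f : BF S) :
    ∀ pol, f.psat (fun s pol d u => (pol = true ↔ T s d u)) pol ↔ (pol = true ↔ f.sat T) := by
  induction f with
  | atom s d u => intro pol; simp [psat, sat]
  | tt => intro pol; simp [psat, sat]
  | not f ih => intro pol; cases pol <;> simp [psat, sat, ih]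
  | and f g ih1 ih2 =>
    intro pol; cases pol <;> simp [psat, sat, ih1, ih2]; tauto

theorem BF.sat_or {S : Type} (T : S → Bool → Bool → Prop) (f g : BF S) :
    (f.or g).sat T ↔ f.sat T ∨ g.sat T := by simp only [or, sat]; tauto

theorem BF.sat_bool {S : Type} (T : S → Bool → Bool → Prop) (b : Bool) :
    (BF.bool b : BF S).sat T ↔ b = true := by cases b <;> simp [bool, sat]

theorem BF.psat_bool {S : Type} (W : S → Bool → Bool → Bool → Prop) (b pol : Bool) :
    (BF.bool b : BF S).psat W pol ↔ (pol = b) := by cases b <;> simp [bool, psat]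

/-- Move to the next document node in direction `d`. -/
def nxf (d : Bool) (φ : Form E Att) (u : Bool) : BF (St E Att) :=
  .or (.atom (.loc φ) d u) (.atom (.w d φ) false u)

open Classical in
noncomputable def expand (e : E) : Form E Att → BF (St E Att)
  | .tt => .tt
  | .lab e' => BF.bool (decide (e = e'))
  | .not φ => .not (expand e φ)
  | .and φ ψ => .and (expand e φ) (expand e ψ)
  | .nx d φ => nxf d φ false
  | .star two φ => .or (expand e φ) (.or (nxf true (.star two φ) false)
      (.and (BF.bool two) (nxf false (.star two φ) false)))
  | .store a d φ => .atom (.st a d φ) false false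
  | .cmp a eq => .atom (.find a eq) false false
  | .ecmp a b eq => .atom (.ef a b eq) false false

open Classical in
/-- The transition formula of an unpolarised state. -/
noncomputable def bf (t : Bool) : St E Att → E ⊕ Att → BF (St E Att)
  | .loc φ, .inl e => expand e φ
  | .loc _, .inr _ => BF.bool false
  | .w _ _, .inl _ => BF.bool false
  | .w d φ, .inr _ => nxf d φ false
  | .st _ _ _, .inl _ => BF.bool false
  | .st a d φ, .inr b => if b = a then nxf d φ true else .atom (.st a d φ) false false
  | .find _ _, .inl _ => BF.bool false
  | .find a eq, .inr b => if b = a then BF.bool (t == eq) else .atom (.find a eq) false false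
  | .ef _ _ _, .inl _ => BF.bool false
  | .ef a1 a2 eq, .inr b =>
      if b = a1 then (if b = a2 then BF.bool eq else .atom (.find a2 eq) false true)
      else if b = a2 then .atom (.find a1 eq) false true else .atom (.ef a1 a2 eq) false false

/-- Intended semantics of states. -/
def T (τ : DataTree (E ⊕ Att)) : St E Att → Node → ℕ → Prop
  | .loc φ, x, D => IsElemNode τ x ∧ Fsem τ φ x D
  | .w d φ, x, D => IsAttrNode τ x ∧ ∃ y, Nxt τ d x y ∧ Fsem τ φ y D
  | .st a d φ, x, _ => ∃ D' y, AV τ a x D' ∧ Nxt τ d x y ∧ Fsem τ φ y D'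
  | .find a eq, x, D => ∃ D', AV τ a x D' ∧ (eq = true ↔ D = D')
  | .ef a b eq, x, _ => ∃ D1 D2, AV τ a x D1 ∧ AV τ b x D2 ∧ (eq = true ↔ D1 = D2)

theorem T_nonleaf {τ : DataTree (E ⊕ Att)} {s : St E Att} {x : Node} {D : ℕ} (h : T τ s x D) :
    τ.Nonleaf x := by
  cases s with
  | loc φ => exact elem_nonleaf h.1
  | w d φ => exact attr_nonleaf h.1
  | st a d φ => obtain ⟨_, _, h, _⟩ := h; exact attr_nonleaf (AV_attr h)
  | find a eq => obtain ⟨_, h, _⟩ := h; exact attr_nonleaf (AV_attr h)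
  | ef a b eq => obtain ⟨_, _, h, _⟩ := h; exact attr_nonleaf (AV_attr h)

/-- Truth of states at the children. -/
def chT (τ : DataTree (E ⊕ Att)) (x : Node) (D D0 : ℕ) (s : St E Att) (d u : Bool) : Prop :=
  T τ s (x ++ [d]) (if u then D0 else D)

theorem nxf_sat {τ : DataTree (E ⊕ Att)} (d u : Bool) (φ : Form E Att) (x : Node) (D D0 : ℕ) :
    (nxf d φ u).sat (chT τ x D D0) ↔ ∃ y, Nxt τ d x y ∧ Fsem τ φ y (if u then D0 else D) := by
  simp only [nxf, BF.sat_or, BF.sat, chT, T]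
  constructor
  · rintro (⟨h1, h2⟩ | ⟨h1, y, h2, h3⟩)
    · exact ⟨_, .here _ h1, h2⟩
    · exact ⟨y, .skip _ _ h1 h2, h3⟩
  · rintro ⟨y, h1, h2⟩
    rcases Nxt_iff.1 h1 with ⟨h3, rfl⟩ | ⟨h3, h4⟩
    · exact Or.inl ⟨h3, h2⟩
    · exact Or.inr ⟨h3, y, h4, h2⟩

theorem st_shift {τ : DataTree (E ⊕ Att)} (hτ : IsXMLTree τ) (a : Att) (d : Bool) (φ : Form E Att)
    (x : Node) :
    (∃ D' y, AV τ a (x ++ [false]) D' ∧ Nxt τ d x y ∧ Fsem τ φ y D') ↔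
    (∃ D' y, AV τ a (x ++ [false]) D' ∧ Nxt τ d (x ++ [false]) y ∧ Fsem τ φ y D') := by
  constructor
  · rintro ⟨D', y, h1, h2, h3⟩
    exact ⟨D', y, h1, (Nxt_attr hτ (AV_attr h1)).1 h2, h3⟩
  · rintro ⟨D', y, h1, h2, h3⟩
    exact ⟨D', y, h1, (Nxt_attr hτ (AV_attr h1)).2 h2, h3⟩

theorem star_unfold {τ : DataTree (E ⊕ Att)} (two : Bool) (φ : Form E Att) (x : Node) (D : ℕ) :
    Fsem τ (.star two φ) x D ↔ Fsem τ φ x D ∨ (∃ y, Nxt τ true x y ∧ Fsem τ (.star two φ) y D) ∨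
      (two = true ∧ ∃ y, Nxt τ false x y ∧ Fsem τ (.star two φ) y D) := by
  constructor
  · rintro ⟨y, h1, h2⟩
    rcases Relation.ReflTransGen.cases_head h1 with rfl | ⟨z, h3, h4⟩
    · exact Or.inl h2
    · rcases h3 with h3 | ⟨h3, h5⟩
      · exact Or.inr (Or.inl ⟨z, h3, y, h4, h2⟩)
      · exact Or.inr (Or.inr ⟨h3, z, h5, y, h4, h2⟩)
  · rintro (h | ⟨z, h3, y, h4, h2⟩ | ⟨h3, z, h5, y, h4, h2⟩)
    · exact ⟨x, .refl, h⟩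
    · exact ⟨y, .head (Or.inl h3) h4, h2⟩
    · exact ⟨y, .head (Or.inr ⟨h3, h5⟩) h4, h2⟩

theorem expand_sat {τ : DataTree (E ⊕ Att)} (hτ : IsXMLTree τ) {x : Node} {e : E} (D D0 : ℕ)
    (hl : τ.label x = some (Sum.inl e)) (φ : Form E Att) :
    (expand e φ).sat (chT τ x D D0) ↔ Fsem τ φ x D := by
  induction φ with
  | tt => simp [expand, BF.sat, Fsem]
  | lab e' => simp [expand, BF.sat_bool, Fsem, hl]
  | not φ ih => simp [expand, BF.sat, Fsem, ih]
  | and φ ψ ih1 ih2 => simp [expand, BF.sat, Fsem, ih1, ih2]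
  | nx d φ ih => simp [expand, nxf_sat, Fsem]
  | star two φ ih =>
    rw [star_unfold]
    simp [expand, nxf_sat, BF.sat_or, BF.sat, BF.sat_bool, ih]
  | store a d φ ih =>
    simp only [expand, BF.sat, chT, T, Fsem]
    exact (st_shift hτ a d φ x).symm
  | cmp a eq => simp [expand, BF.sat, chT, T, Fsem]
  | ecmp a b eq => simp [expand, BF.sat, chT, T, Fsem]

theorem AV_elem {τ : DataTree (E ⊕ Att)} {x : Node} {e : E} {a : Att} {D : ℕ}
    (hl : τ.label x = some (Sum.inl e)) : ¬ AV τ a x D := fun h =>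
  not_elem_attr ⟨e, hl⟩ (AV_attr h)

theorem AV_same {τ : DataTree (E ⊕ Att)} {x : Node} {a : Att} {D D0 : ℕ}
    (hl : τ.label x = some (Sum.inr a)) (hd : τ.dlabel x = some D0) : AV τ a x D ↔ D = D0 := by
  constructor
  · intro h; exact AV_fun h (.here _ _ hl hd)
  · rintro rfl; exact .here _ _ hl hd

theorem AV_other {τ : DataTree (E ⊕ Att)} {x : Node} {a b : Att} {D : ℕ}
    (hl : τ.label x = some (Sum.inr b)) (hb : b ≠ a) : AV τ a x D ↔ AV τ a (x ++ [false]) D := by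
  constructor
  · intro h
    rcases h with ⟨_, _, h, _⟩ | ⟨_, _, _, _, _, h⟩
    · rw [hl] at h; simp at h; exact absurd h hb
    · exact h
  · intro h; exact .skip _ _ _ hl hb h

theorem bf_sat {τ : DataTree (E ⊕ Att)} (hτ : IsXMLTree τ) {x : Node} {c : E ⊕ Att} {D D0 : ℕ}
    (hl : τ.label x = some c) (hd : τ.dlabel x = some D0) (s : St E Att) :
    (bf (decide (D = D0)) s c).sat (chT τ x D D0) ↔ T τ s x D := by
  rcases c with e | b
  · have he : IsElemNode τ x := ⟨e, hl⟩
    cases s with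
    | loc φ => simp only [bf, T, expand_sat hτ D D0 hl, he, true_and]
    | w d φ => simp [bf, T, BF.sat_bool, not_elem_attr he]
    | st a d φ => simp [bf, T, BF.sat_bool, AV_elem hl]
    | find a eq => simp [bf, T, BF.sat_bool, AV_elem hl]
    | ef a b eq => simp [bf, T, BF.sat_bool, AV_elem hl]
  · have ha : IsAttrNode τ x := ⟨b, hl⟩
    have hne : ¬ IsElemNode τ x := fun h => not_elem_attr h ha
    cases s with
    | loc φ => simp [bf, T, BF.sat_bool, hne]
    | w d φ => simp [bf, T, nxf_sat, ha]
    | st a d φ =>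
      by_cases hb : b = a
      · subst hb
        simp [bf, T, nxf_sat, AV_same hl hd]
      · simp only [bf, T, hb, if_false, BF.sat, chT, AV_other hl hb]
        exact (st_shift hτ a d φ x).symm
    | find a eq =>
      by_cases hb : b = a
      · subst hb
        cases eq <;> simp [bf, T, BF.sat_bool, AV_same hl hd]
      · simp [bf, T, hb, BF.sat, chT, AV_other hl hb]
    | ef a1 a2 eq =>
      by_cases h1 : b = a1
      · subst h1
        by_cases h2 : b = a2
        · subst h2
          simp [bf, T, BF.sat_bool, AV_same hl hd]
        · simp [bf, T, h2, BF.sat, chT, AV_same hl hd, AV_other hl h2]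
      · by_cases h2 : b = a2
        · subst h2
          simp [bf, T, h1, BF.sat, chT, AV_same hl hd, AV_other hl h1, eq_comm]
        · simp [bf, T, h1, h2, BF.sat, chT, AV_other hl h1, AV_other hl h2]

/-! ### Finite closure -/

def cl : Form E Att → Set (St E Att)
  | .tt => {.loc .tt}
  | .lab e => {.loc (.lab e)}
  | .not φ => {.loc (.not φ)} ∪ cl φ
  | .and φ ψ => {.loc (.and φ ψ)} ∪ (cl φ ∪ cl ψ)
  | .nx d φ => {.loc (.nx d φ), .w d φ} ∪ cl φ
  | .star two φ => {.loc (.star two φ), .w true (.star two φ), .w false (.star two φ)} ∪ cl φ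
  | .store a d φ => {.loc (.store a d φ), .st a d φ, .w d φ} ∪ cl φ
  | .cmp a eq => {.loc (.cmp a eq), .find a eq}
  | .ecmp a b eq => {.loc (.ecmp a b eq), .ef a b eq, .find a eq, .find b eq}

theorem cl_finite (φ : Form E Att) : (cl φ).Finite := by
  induction φ <;> simp_all [cl]

theorem at_cl (φ : Form E Att) : .loc φ ∈ cl φ := by
  cases φ <;> simp [cl]

theorem atoms_or {S : Type} (f g : BF S) : (f.or g).atoms = f.atoms ∪ g.atoms := rfl
theorem atoms_bool {S : Type} (b : Bool) : (BF.bool b : BF S).atoms = ∅ := by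
  cases b <;> rfl
theorem atoms_nxf (d u : Bool) (φ : Form E Att) : (nxf d φ u).atoms = {.loc φ, .w d φ} := rfl

theorem expand_atoms (e : E) (φ : Form E Att) : (expand e φ).atoms ⊆ cl φ := by
  induction φ with
  | tt => simp [expand, BF.atoms]
  | lab e' => simp [expand, atoms_bool]
  | not φ ih => exact fun s hs => Or.inr (ih hs)
  | and φ ψ ih1 ih2 => exact fun s hs => Or.inr (hs.imp (fun h => ih1 h) (fun h => ih2 h))
  | nx d φ ih =>
    intro s hs
    simp only [expand, atoms_nxf] at hs
    rcases hs with rfl | rfl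
    · exact Or.inr (at_cl φ)
    · simp [cl]
  | star two φ ih =>
    intro s hs
    simp only [expand, atoms_nxf, atoms_or, BF.atoms, atoms_bool] at hs
    rcases hs with h | h
    · exact Or.inr (ih h)
    · left; revert h; simp; tauto
  | store a d φ ih => simp [expand, BF.atoms, cl]
  | cmp a eq => simp [expand, BF.atoms, cl]
  | ecmp a b eq => simp [expand, BF.atoms, cl]

theorem bf_atoms_attr (φ : Form E Att) : ∀ s, (∀ ψ, s ≠ St.loc ψ) → s ∈ cl φ → ∀ t c,
    (bf t s c).atoms ⊆ cl φ := by
  induction φ with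
  | tt => intro s h hs; exact absurd hs (h _)
  | lab e => intro s h hs; exact absurd hs (h _)
  | not φ ih =>
    intro s h hs t c
    rcases hs with rfl | hs
    · exact absurd rfl (h _)
    · exact (ih s h hs t c).trans Set.subset_union_right
  | and φ ψ ih1 ih2 =>
    intro s h hs t c
    rcases hs with rfl | hs | hs
    · exact absurd rfl (h _)
    · exact (ih1 s h hs t c).trans (Set.subset_union_left.trans Set.subset_union_right)
    · exact (ih2 s h hs t c).trans (Set.subset_union_right.trans Set.subset_union_right)
  | nx d φ ih =>
    intro s h hs t c
    rcases hs with (rfl | rfl) | hs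
    · exact absurd rfl (h _)
    · cases c <;> simp [bf, atoms_bool, atoms_nxf, cl, Set.insert_subset_iff, at_cl]
    · exact (ih s h hs t c).trans Set.subset_union_right
  | star two φ ih =>
    intro s h hs t c
    rcases hs with (rfl | rfl | rfl) | hs
    · exact absurd rfl (h _)
    · cases c <;> simp [bf, atoms_bool, atoms_nxf, cl, Set.insert_subset_iff]
    · cases c <;> simp [bf, atoms_bool, atoms_nxf, cl, Set.insert_subset_iff]
    · exact (ih s h hs t c).trans Set.subset_union_right
  | store a d φ ih =>
    intro s h hs t c
    rcases hs with (rfl | rfl | rfl) | hs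
    · exact absurd rfl (h _)
    · rcases c with e | b
      · simp [bf, atoms_bool]
      · by_cases hb : b = a <;>
          simp [bf, hb, atoms_nxf, cl, Set.insert_subset_iff, at_cl, BF.atoms]
    · cases c <;> simp [bf, atoms_bool, atoms_nxf, cl, Set.insert_subset_iff, at_cl]
    · exact (ih s h hs t c).trans Set.subset_union_right
  | cmp a eq =>
    intro s h hs t c
    rcases hs with rfl | rfl
    · exact absurd rfl (h _)
    · rcases c with e | b
      · simp [bf, atoms_bool]
      · by_cases hb : b = a <;> simp [bf, hb, atoms_bool, cl, BF.atoms]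
  | ecmp a a' eq =>
    intro s h hs t c
    rcases hs with rfl | rfl | rfl | rfl
    · exact absurd rfl (h _)
    · rcases c with e | b
      · simp [bf, atoms_bool]
      · simp only [bf]; split_ifs <;> simp [atoms_bool, cl, BF.atoms]
    · rcases c with e | b
      · simp [bf, atoms_bool]
      · simp only [bf]; split_ifs <;> simp [atoms_bool, cl, BF.atoms]
    · rcases c with e | b
      · simp [bf, atoms_bool]
      · simp only [bf]; split_ifs <;> simp [atoms_bool, cl, BF.atoms]

theorem cl_at (φ : Form E Att) : ∀ ψ, St.loc ψ ∈ cl φ → cl ψ ⊆ cl φ := by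
  induction φ with
  | tt => simp [cl]
  | lab e => simp [cl]
  | not φ ih =>
    rintro ψ (h | h)
    · cases h; exact subset_rfl
    · exact (ih ψ h).trans Set.subset_union_right
  | and φ φ' ih1 ih2 =>
    rintro ψ (h | h | h)
    · cases h; exact subset_rfl
    · exact (ih1 ψ h).trans (Set.subset_union_left.trans Set.subset_union_right)
    · exact (ih2 ψ h).trans (Set.subset_union_right.trans Set.subset_union_right)
  | nx d φ ih =>
    rintro ψ ((h | h) | h)
    · cases h; exact subset_rfl
    · cases h
    · exact (ih ψ h).trans Set.subset_union_right
  | star two φ ih =>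
    rintro ψ ((h | h | h) | h)
    · cases h; exact subset_rfl
    · cases h
    · cases h
    · exact (ih ψ h).trans Set.subset_union_right
  | store a d φ ih =>
    rintro ψ ((h | h | h) | h)
    · cases h; exact subset_rfl
    · cases h
    · cases h
    · exact (ih ψ h).trans Set.subset_union_right
  | cmp a eq => rintro ψ (h | h) <;> cases h; exact subset_rfl
  | ecmp a b eq => rintro ψ (h | h | h | h) <;> cases h; exact subset_rfl

theorem bf_atoms (φ : Form E Att) (s : St E Att) (hs : s ∈ cl φ) (t : Bool) (c : E ⊕ Att) :
    (bf t s c).atoms ⊆ cl φ := by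
  cases s with
  | loc ψ =>
    rcases c with e | b
    · exact (expand_atoms e ψ).trans (cl_at φ ψ hs)
    · simp [bf, atoms_bool]
  | w d ψ => exact bf_atoms_attr φ _ (by simp) hs t c
  | st a d ψ => exact bf_atoms_attr φ _ (by simp) hs t c
  | find a eq => exact bf_atoms_attr φ _ (by simp) hs t c
  | ef a b eq => exact bf_atoms_attr φ _ (by simp) hs t c

/-! ### Post-fixed points -/

def chV (V : St E Att → Bool → Node → ℕ → Prop) (x : Node) (D D0 : ℕ)
    (s : St E Att) (pol d u : Bool) : Prop :=
  V s pol (x ++ [d]) (if u then D0 else D)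

structure Post (τ : DataTree (E ⊕ Att)) (V : St E Att → Bool → Node → ℕ → Prop) : Prop where
  step : ∀ s pol x D c D0, τ.label x = some c → τ.dlabel x = some D0 → V s pol x D →
    (bf (decide (D = D0)) s c).psat (chV V x D D0) pol
  leaf : ∀ s pol x D, V s pol x D → ¬ τ.Nonleaf x → pol = false

theorem exists_labels {τ : DataTree (E ⊕ Att)} {x : Node} (h : τ.Nonleaf x) :
    ∃ c D0, τ.label x = some c ∧ τ.dlabel x = some D0 := by
  obtain ⟨c, hc⟩ := Option.isSome_iff_exists.1 h
  obtain ⟨D0, hd⟩ := Option.isSome_iff_exists.1 ((τ.domain_eq x).2 h)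
  exact ⟨c, D0, hc, hd⟩

theorem good_leaf {τ : DataTree (E ⊕ Att)} {V : St E Att → Bool → Node → ℕ → Prop}
    (hV : Post τ V) {s : St E Att} {pol : Bool} {x : Node} {D : ℕ} (h : V s pol x D)
    (hx : ¬ τ.Nonleaf x) : pol = true ↔ T τ s x D := by
  have := hV.leaf s pol x D h hx
  subst this
  simp only [Bool.false_eq_true, false_iff]
  exact fun hT => hx (T_nonleaf hT)

/-- If children threads are truthful then so is the parent thread. -/
theorem good_step {τ : DataTree (E ⊕ Att)} (hτ : IsXMLTree τ)
    {V : St E Att → Bool → Node → ℕ → Prop}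
    (hV : Post τ V) {s : St E Att} {pol : Bool} {x : Node} {D D0 : ℕ} {c : E ⊕ Att}
    (hl : τ.label x = some c) (hd : τ.dlabel x = some D0) (h : V s pol x D)
    (hch : ∀ s' ∈ (bf (decide (D = D0)) s c).atoms, ∀ pol d u, chV V x D D0 s' pol d u →
      (pol = true ↔ chT τ x D D0 s' d u)) :
    pol = true ↔ T τ s x D := by
  have h1 := hV.step s pol x D c D0 hl hd h
  have h2 := BF.psat_mono _ hch pol h1
  rw [BF.psat_T (chT τ x D D0)] at h2
  rw [h2, bf_sat hτ hl hd]

theorem good_finite {τ : DataTree (E ⊕ Att)} (hτ : IsXMLTree τ) (hfin : τ.Finite)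
    {V : St E Att → Bool → Node → ℕ → Prop} (hV : Post τ V) (s : St E Att) (pol : Bool)
    (x : Node) (D : ℕ) (h : V s pol x D) : pol = true ↔ T τ s x D := by
  obtain ⟨L, hL⟩ : ∃ L : ℕ, ∀ y, τ.Nonleaf y → y.length < L := by
    obtain ⟨B, hB⟩ := (hfin.image List.length).bddAbove
    exact ⟨B + 1, fun y hy => Nat.lt_succ_of_le (hB ⟨y, hy, rfl⟩)⟩
  have key : ∀ k, ∀ s pol x D, L ≤ x.length + k → V s pol x D → (pol = true ↔ T τ s x D) := by
    intro k
    induction k with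
    | zero =>
      intro s pol x D hk h
      refine good_leaf hV h ?_
      intro hx
      have := hL x hx
      omega
    | succ k ih =>
      intro s pol x D hk h
      by_cases hx : τ.Nonleaf x
      · obtain ⟨c, D0, hl, hd⟩ := exists_labels hx
        refine good_step hτ hV hl hd h ?_
        intro s' _ pol d u h'
        exact ih _ _ _ _ (by simp; omega) h'
      · exact good_leaf hV h hx
  exact key L s pol x D (by omega) h

/-! ### Attribute chains are finite -/

theorem attr_chain {τ : DataTree (E ⊕ Att)} (hτ : IsXMLTree τ) : ∀ (k : ℕ) (x : Node),
    x.length = k → τ.Nonleaf x → ∃ n j, IsElemNode τ n ∧ x = n ++ List.replicate j false ∧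
      ∀ i, 1 ≤ i → i ≤ j → IsAttrNode τ (n ++ List.replicate i false) := by
  intro k
  induction k with
  | zero =>
    intro x hk hx
    have : x = [] := by simpa using hk
    subst this
    exact ⟨[], 0, hτ.root_elem, by simp, by intro i h1 h2; omega⟩
  | succ k ih =>
    intro x hk hx
    obtain ⟨c, D0, hl, hd⟩ := exists_labels hx
    rcases c with e | b
    · exact ⟨x, 0, ⟨e, hl⟩, by simp, by intro i h1 h2; omega⟩
    · rcases List.eq_nil_or_concat x with rfl | ⟨m, d, rfl⟩
      · simp at hk
      · rw [List.concat_eq_append] at *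
        have hd' : d = false := by
          cases d with
          | false => rfl
          | true => exact absurd ⟨b, hl⟩ (hτ.attr_left m)
        subst hd'
        obtain ⟨n, j, hn, rfl, hj⟩ := ih m (by simpa using hk) (τ.tree_cond m false hx)
        refine ⟨n, j + 1, hn, (app_rep' n j).symm, ?_⟩
        intro i h1 h2
        rcases Nat.lt_or_ge j i with h3 | h3
        · obtain rfl : i = j + 1 := by omega
          rw [app_rep']; exact ⟨b, hl⟩
        · exact hj i h1 h3

theorem chain_ends [Finite Att] {τ : DataTree (E ⊕ Att)} (hτ : IsXMLTree τ) (x : Node) :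
    ∃ k, ¬ IsAttrNode τ (x ++ List.replicate (k + 1) false) := by
  by_contra hcon
  push Not at hcon
  have hx : τ.Nonleaf x := by
    have := attr_nonleaf (hcon 0)
    exact τ.tree_cond x false (by simpa [DataTree.Nonleaf] using this)
  obtain ⟨n, j, hn, rfl, hj⟩ := attr_chain hτ _ x rfl hx
  have hall : ∀ i, 1 ≤ i → IsAttrNode τ (n ++ List.replicate i false) := by
    intro i hi
    rcases Nat.lt_or_ge j i with h | h
    · have := hcon (i - j - 1)
      rw [List.append_assoc, ← List.replicate_add, show j + (i - j - 1 + 1) = i by omega] at this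
      exact this
    · exact hj i hi h
  have hch : ∀ i, AttrChain τ n (i + 1) := fun i => ⟨by omega, fun i' h1 _ => hall i' h1⟩
  choose f hf using fun i => hall (i + 1) (by omega)
  refine not_injective_infinite_finite f ?_
  intro i i' h
  by_contra hne
  exact hτ.attr_distinct n (i + 1) (i' + 1) hn (hch i) (hch i') (by omega)
    (by rw [hf, hf, h])

theorem chain_ind [Finite Att] {τ : DataTree (E ⊕ Att)} (hτ : IsXMLTree τ) (P : Node → Prop)
    (h : ∀ x, (IsAttrNode τ (x ++ [false]) → P (x ++ [false])) → P x) (x : Node) : P x := by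
  obtain ⟨k, hk⟩ := chain_ends hτ x
  induction k generalizing x with
  | zero => exact h x (fun ha => absurd ha (by simpa using hk))
  | succ k ih =>
    refine h x (fun _ => ih _ ?_)
    rwa [← app_rep]

/-! ### Safety: threads are truthful on infinite trees -/

theorem nxf_psat (W : St E Att → Bool → Bool → Bool → Prop) (d u : Bool) (φ : Form E Att) :
    ((nxf d φ u).psat W true ↔ W (.loc φ) true d u ∨ W (.w d φ) true false u) ∧
    ((nxf d φ u).psat W false ↔ W (.loc φ) false d u ∧ W (.w d φ) false false u) := by
  simp [nxf, BF.or, BF.psat]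

/-- Following a negative thread to the next document node. -/
theorem nx_neg {τ : DataTree (E ⊕ Att)}
    {V : St E Att → Bool → Node → ℕ → Prop} (hV : Post τ V) {d : Bool} {φ : Form E Att}
    {m y : Node} (h : Nxt τ d m y) : ∀ (u : Bool) (D D0 : ℕ),
    (nxf d φ u).psat (chV V m D D0) false → V (.loc φ) false y (if u then D0 else D) := by
  induction h with
  | here m h => intro u D D0 hs; exact ((nxf_psat _ d u φ).2.1 hs).1
  | skip m y h1 h2 ih =>
    intro u D D0 hs
    have hw := ((nxf_psat _ d u φ).2.1 hs).2
    obtain ⟨c, D1, hl, hd⟩ := exists_labels (attr_nonleaf h1)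
    obtain ⟨b, hb⟩ := h1
    rw [hb] at hl; cases hl
    have := hV.step _ _ _ _ _ _ hb hd hw
    exact ih false _ _ this

theorem nx_pos [Finite Att] {τ : DataTree (E ⊕ Att)} (hτ : IsXMLTree τ)
    {V : St E Att → Bool → Node → ℕ → Prop} (hV : Post τ V) {d : Bool} {φ : Form E Att} (m : Node) :
    ∀ (u : Bool) (D D0 : ℕ),
    (nxf d φ u).psat (chV V m D D0) true →
      ∃ y, Nxt τ d m y ∧ V (.loc φ) true y (if u then D0 else D) := by
  refine chain_ind hτ (fun m => ∀ (u : Bool) (D D0 : ℕ),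
    (nxf d φ u).psat (chV V m D D0) true →
      ∃ y, Nxt τ d m y ∧ V (.loc φ) true y (if u then D0 else D)) ?_ m
  intro m ih u D D0 hs
  rcases (nxf_psat _ d u φ).1.1 hs with h | h
  · refine ⟨_, .here _ ?_, h⟩
    by_cases hx : τ.Nonleaf (m ++ [d])
    · obtain ⟨c, D1, hl, hd⟩ := exists_labels hx
      have := hV.step _ _ _ _ _ _ hl hd h
      rcases c with e | b
      · exact ⟨e, hl⟩
      · simp [bf, BF.psat_bool] at this
    · exact absurd (hV.leaf _ _ _ _ h hx) (by simp)
  · by_cases hx : τ.Nonleaf (m ++ [false])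
    · obtain ⟨c, D1, hl, hd⟩ := exists_labels hx
      have h2 := hV.step _ _ _ _ _ _ hl hd h
      rcases c with e | b
      · simp [bf, BF.psat_bool] at h2
      · obtain ⟨y, h3, h4⟩ := ih ⟨b, hl⟩ false _ _ h2
        exact ⟨y, .skip _ _ ⟨b, hl⟩ h3, h4⟩
    · exact absurd (hV.leaf _ _ _ _ h hx) (by simp)

/-- The claim proved by structural induction on formulae. -/
def EG (τ : DataTree (E ⊕ Att)) (V : St E Att → Bool → Node → ℕ → Prop) (pol : Bool)
    (φ : Form E Att) : Prop :=
  ∀ x e D D0, τ.label x = some (Sum.inl e) → τ.dlabel x = some D0 →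
    (expand e φ).psat (chV V x D D0) pol → (pol = true ↔ Fsem τ φ x D)

theorem EG_loc {τ : DataTree (E ⊕ Att)} {V : St E Att → Bool → Node → ℕ → Prop} (hV : Post τ V)
    {pol : Bool} {φ : Form E Att} (h : EG τ V pol φ) {y : Node} {D : ℕ} (hy : IsElemNode τ y)
    (hv : V (.loc φ) pol y D) : pol = true ↔ Fsem τ φ y D := by
  obtain ⟨c, D0, hl, hd⟩ := exists_labels (elem_nonleaf hy)
  obtain ⟨e, he⟩ := hy
  rw [he] at hl; cases hl
  exact h y e D D0 he hd (hV.step _ _ _ _ _ _ he hd hv)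

theorem nx_good [Finite Att] {τ : DataTree (E ⊕ Att)} (hτ : IsXMLTree τ)
    {V : St E Att → Bool → Node → ℕ → Prop} (hV : Post τ V) {pol d u : Bool} {φ : Form E Att}
    (h : EG τ V pol φ) {m : Node} {D D0 : ℕ} (hs : (nxf d φ u).psat (chV V m D D0) pol) :
    pol = true ↔ ∃ y, Nxt τ d m y ∧ Fsem τ φ y (if u then D0 else D) := by
  cases pol with
  | true =>
    obtain ⟨y, h1, h2⟩ := nx_pos hτ hV m u D D0 hs
    exact ⟨fun _ => ⟨y, h1, (EG_loc hV h (Nxt_elem h1) h2).1 rfl⟩, fun _ => rfl⟩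
  | false =>
    simp only [Bool.false_eq_true, false_iff]
    rintro ⟨y, h1, h2⟩
    have := (EG_loc hV h (Nxt_elem h1) (nx_neg hV h1 u D D0 hs)).2 h2
    simp at this

theorem chain_good [Finite Att] {τ : DataTree (E ⊕ Att)} (hτ : IsXMLTree τ)
    {V : St E Att → Bool → Node → ℕ → Prop} (hV : Post τ V) (s : St E Att) (pol : Bool)
    (hel : ∀ t e, bf t s (.inl e) = BF.bool false)
    (hat : ∀ x b D D0, τ.label x = some (.inr b) → τ.dlabel x = some D0 →
      (∀ D', V s pol (x ++ [false]) D' → (pol = true ↔ T τ s (x ++ [false]) D')) →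
      (bf (decide (D = D0)) s (.inr b)).psat (chV V x D D0) pol →
      (pol = true ↔ (bf (decide (D = D0)) s (.inr b)).sat (chT τ x D D0))) (x : Node) :
    ∀ D, V s pol x D → (pol = true ↔ T τ s x D) := by
  have hna : ∀ x, ¬ IsAttrNode τ x → ∀ D, V s pol x D → (pol = true ↔ T τ s x D) := by
    intro x ha D h
    by_cases hx : τ.Nonleaf x
    · obtain ⟨c, D0, hl, hd⟩ := exists_labels hx
      have h1 := hV.step _ _ _ _ _ _ hl hd h
      rw [← bf_sat hτ hl hd]
      rcases c with e | b
      · simpa [hel, BF.psat_bool, BF.sat_bool] using h1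
      · exact absurd ⟨b, hl⟩ ha
    · exact good_leaf hV h hx
  refine chain_ind hτ (fun x => ∀ D, V s pol x D → (pol = true ↔ T τ s x D)) ?_ x
  intro x ih
  by_cases ha : IsAttrNode τ x
  · intro D h
    obtain ⟨b, hl⟩ := ha
    obtain ⟨c, D0, hl', hd⟩ := exists_labels (attr_nonleaf ⟨b, hl⟩)
    have h1 := hV.step _ _ _ _ _ _ hl hd h
    rw [← bf_sat hτ hl hd]
    refine hat x b D D0 hl hd ?_ h1
    by_cases ha' : IsAttrNode τ (x ++ [false])
    · exact ih ha'
    · exact hna _ ha'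
  · exact hna x ha

theorem find_good [Finite Att] {τ : DataTree (E ⊕ Att)} (hτ : IsXMLTree τ)
    {V : St E Att → Bool → Node → ℕ → Prop} (hV : Post τ V) (a : Att) (eq pol : Bool) (x : Node) :
    ∀ D, V (.find a eq) pol x D → (pol = true ↔ T τ (.find a eq) x D) := by
  refine chain_good hτ hV _ pol (fun _ _ => rfl) ?_ x
  intro x b D D0 hl hd ih h1
  by_cases hb : b = a
  · simp only [bf, hb, if_true, BF.psat_bool] at h1
    simp only [bf, hb, if_true, BF.sat_bool, h1]
  · simp only [bf, hb, if_false, BF.psat] at h1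
    simp only [bf, hb, if_false, BF.sat]
    exact ih _ h1

theorem ef_good [Finite Att] {τ : DataTree (E ⊕ Att)} (hτ : IsXMLTree τ)
    {V : St E Att → Bool → Node → ℕ → Prop} (hV : Post τ V) (a a' : Att) (eq pol : Bool)
    (x : Node) : ∀ D, V (.ef a a' eq) pol x D → (pol = true ↔ T τ (.ef a a' eq) x D) := by
  refine chain_good hτ hV _ pol (fun _ _ => rfl) ?_ x
  intro x b D D0 hl hd ih h1
  simp only [bf] at h1 ⊢
  split_ifs at h1 ⊢ with h2 h3 h3
  · simp only [BF.psat_bool] at h1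
    simp only [BF.sat_bool, h1]
  · exact find_good hτ hV _ _ _ _ _ h1
  · exact find_good hτ hV _ _ _ _ _ h1
  · exact ih _ h1

theorem st_good [Finite Att] {τ : DataTree (E ⊕ Att)} (hτ : IsXMLTree τ)
    {V : St E Att → Bool → Node → ℕ → Prop} (hV : Post τ V) (a : Att) (d pol : Bool)
    (φ : Form E Att) (h : EG τ V pol φ)
    (x : Node) : ∀ D, V (.st a d φ) pol x D → (pol = true ↔ T τ (.st a d φ) x D) := by
  refine chain_good hτ hV _ pol (fun _ _ => rfl) ?_ x
  intro x b D D0 hl hd ih h1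
  simp only [bf] at h1 ⊢
  split_ifs at h1 ⊢ with h2
  · rw [nxf_sat]; exact nx_good hτ hV h h1
  · exact ih _ h1

theorem EG_all [Finite Att] {τ : DataTree (E ⊕ Att)} (hτ : IsXMLTree τ)
    {V : St E Att → Bool → Node → ℕ → Prop} (hV : Post τ V) (φ : Form E Att) :
    ∀ pol, FSafe pol φ → EG τ V pol φ := by
  induction φ with
  | tt => intro pol _ x e D D0 hl hd h; simpa [expand, BF.psat, Fsem] using h
  | lab e' =>
    intro pol _ x e D D0 hl hd h
    simp only [expand, BF.psat_bool] at h
    simp [h, Fsem, hl]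
  | not φ ih =>
    intro pol hs x e D D0 hl hd h
    have := ih (!pol) hs x e D D0 hl hd h
    cases pol <;> simpa [Fsem] using this
  | and φ ψ ih1 ih2 =>
    intro pol hs x e D D0 hl hd h
    have i1 := ih1 pol hs.1 x e D D0 hl hd
    have i2 := ih2 pol hs.2 x e D D0 hl hd
    cases pol with
    | true =>
      simp only [true_iff] at i1 i2 ⊢
      exact ⟨i1 h.1, i2 h.2⟩
    | false =>
      simp only [Bool.false_eq_true, false_iff] at i1 i2 ⊢
      rintro ⟨h1, h2⟩
      rcases h with h | h
      · exact i1 h h1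
      · exact i2 h h2
  | nx d φ ih =>
    intro pol hs x e D D0 hl hd h
    have := nx_good hτ hV (ih pol hs) h
    simpa [Fsem] using this
  | star two φ ih =>
    rintro pol ⟨rfl, hs⟩
    have ih := ih false hs
    intro x e D D0 hl hd h
    simp only [Bool.false_eq_true, false_iff]
    rintro ⟨y, hp, hy⟩
    induction hp using Relation.ReflTransGen.head_induction_on generalizing e D0 with
    | refl =>
      have h1 : (expand e φ).psat (chV V y D D0) false := by
        simp only [expand, BF.or, BF.psat, Bool.not_false, Bool.not_true] at h
        exact h.1
      have := (ih y e D D0 hl hd h1).2 hy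
      simp at this
    | @head x z hxz _ ihp =>
      have h1 : (nxf true (.star two φ) false).psat (chV V x D D0) false ∧
          (two = true → (nxf false (.star two φ) false).psat (chV V x D D0) false) := by
        simp only [expand, BF.or, BF.psat, Bool.not_false, Bool.not_true, BF.psat_bool] at h
        refine ⟨h.2.1, fun ht => ?_⟩
        rcases h.2.2 with h3 | h3
        · rw [ht] at h3; simp at h3
        · exact h3
      have h2 : V (.loc (.star two φ)) false z D := by
        rcases hxz with h3 | ⟨ht, h3⟩
        · exact nx_neg hV h3 false D D0 h1.1
        · exact nx_neg hV h3 false D D0 (h1.2 ht)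
      obtain ⟨e', he⟩ := Stp_elem hxz
      obtain ⟨c, D1, hl', hd'⟩ := exists_labels (elem_nonleaf ⟨e', he⟩)
      exact ihp e' D1 he hd' (hV.step _ _ _ _ _ _ he hd' h2)
  | store a d φ ih =>
    intro pol hs x e D D0 hl hd h
    rw [← expand_sat hτ D D0 hl]
    exact st_good hτ hV a d pol φ (ih pol hs) _ _ h
  | cmp a eq =>
    intro pol hs x e D D0 hl hd h
    rw [← expand_sat hτ D D0 hl]
    exact find_good hτ hV a eq pol _ _ h
  | ecmp a b eq =>
    intro pol hs x e D D0 hl hd h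
    rw [← expand_sat hτ D D0 hl]
    exact ef_good hτ hV a b eq pol _ _ h


/-! ### The automaton -/

open Classical in
noncomputable def ret (φ : Form E Att) (s : St E Att) : {s // s ∈ cl φ} :=
  if h : s ∈ cl φ then ⟨s, h⟩ else ⟨.loc φ, at_cl φ⟩

theorem ret_val (φ : Form E Att) {s : St E Att} (h : s ∈ cl φ) : ret φ s = ⟨s, h⟩ := by
  simp [ret, h]

noncomputable def aut (φ : Form E Att) : ATRA (E ⊕ Att) where
  Q := {s // s ∈ cl φ} × Bool
  fin := by
    have : Finite {s // s ∈ cl φ} := (cl_finite φ).to_subtype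
    infer_instance
  qI := (⟨.loc φ, at_cl φ⟩, true)
  F := {q | q.2 = false}
  δ q c t := (bf t q.1.1 c).compile (ret φ) q.2

/-- Threads of a run on a subtree, as a predicate on nodes of the whole tree. -/
def runV (τ : DataTree (E ⊕ Att)) (n : Node) (hn : (τ.label n).isSome) (φ : Form E Att)
    (ρ : (aut φ).Run (τ.subtree n hn)) (s : St E Att) (pol : Bool) (x : Node) (D : ℕ) : Prop :=
  ∃ (h : s ∈ cl φ) (m : Node), x = n ++ m ∧ (((⟨s, h⟩, pol) : {s // s ∈ cl φ} × Bool), D) ∈ ρ.G m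

theorem runV_post (τ : DataTree (E ⊕ Att)) (n : Node) (hn : (τ.label n).isSome) (φ : Form E Att)
    (ρ : (aut φ).Run (τ.subtree n hn)) (hρ : ρ.Final) : Post τ (runV τ n hn φ ρ) where
  step := by
    rintro s pol x D c D0 hl hd ⟨hs, m, rfl, hG⟩
    obtain ⟨R, hR, hsub⟩ := ρ.step m c D0 hl hd _ _ hG
    have hR := (BF.compile_sat (ret φ) R (bf (decide (D = D0)) s c) pol).1 hR
    refine BF.psat_mono _ ?_ pol hR
    intro s' hs' pol' d u hmem
    have hcl := bf_atoms φ s hs _ _ hs'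
    rw [ret_val φ hcl] at hmem
    refine ⟨hcl, m ++ [d], by simp, ?_⟩
    have h1 := hsub d
    cases u with
    | true => have := h1.1 _ hmem; cases d <;> exact this
    | false => have := h1.2 _ hmem; cases d <;> exact this
  leaf := by
    rintro s pol x D ⟨hs, m, rfl, hG⟩ hx
    by_cases hm : m ∈ (τ.subtree n hn).Nodes
    · exact hρ m ⟨hm, hx⟩ _ _ hG
    · rw [ρ.support m hm] at hG; exact hG.elim

theorem exists_run (τ : DataTree (E ⊕ Att)) (hτ : IsXMLTree τ) (n : Node)
    (hn : IsElemNode τ n) (φ : Form E Att) (h : ∀ D, Fsem τ φ n D) :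
    ∃ ρ : (aut φ).Run (τ.subtree n hn.isSome), ρ.Final := by
  let σ := τ.subtree n hn.isSome
  let data : Node → Set ℕ := fun m => {D | ∃ m', m' <+: m ∧ σ.dlabel m' = some D}
  have hdata : ∀ m, (data m).Finite := by
    intro m
    have h1 : (data m) ⊆ (fun m' => (σ.dlabel m').getD 0) '' {m' | m' ∈ m.inits} := by
      rintro D ⟨m', h1, h2⟩
      exact ⟨m', by simpa using h1, by simp [h2]⟩
    exact (Set.Finite.image _ (List.finite_toSet _)).subset h1
  let G : Node → Set ((aut φ).Q × ℕ) := fun m =>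
    {q | m ∈ σ.Nodes ∧ q.2 ∈ data m ∧ (q.1.2 = true ↔ T τ q.1.1.1 (n ++ m) q.2)}
  have hfin : ∀ m, (G m).Finite := by
    intro m
    have := (aut φ).fin
    refine ((Set.finite_univ (α := (aut φ).Q)).prod (hdata m)).subset ?_
    rintro ⟨q, D⟩ hq
    exact ⟨trivial, hq.2.1⟩
  refine ⟨⟨G, hfin, ?_, ?_, ?_⟩, ?_⟩
  · intro m hm
    ext q
    simp only [Set.mem_empty_iff_false, iff_false]
    exact fun hq => hm hq.1
  · obtain ⟨c, D, hl, hd⟩ := exists_labels (elem_nonleaf hn)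
    have hd' : σ.dlabel [] = some D := by
      change τ.dlabel (n ++ []) = _
      simpa using hd
    refine ⟨D, hd', Or.inl rfl, ⟨[], List.prefix_rfl, hd'⟩, ?_⟩
    change true = true ↔ T τ (.loc φ) (n ++ []) D
    simp only [List.append_nil, true_iff]
    exact ⟨hn, h D⟩
  · rintro m c D0 hl hd ⟨⟨s, hs⟩, pol⟩ D ⟨hm, hD, hT⟩
    change pol = true ↔ T τ s (n ++ m) D at hT
    refine ⟨fun d u => {q | q.2 = true ↔ T τ q.1.1 ((n ++ m) ++ [d]) (if u then D0 else D)},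
      ?_, ?_⟩
    · refine (BF.compile_sat (ret φ) _ (bf (decide (D = D0)) s c) pol).2 ?_
      rw [← bf_sat hτ (show τ.label (n ++ m) = some c from hl) hd,
        ← BF.psat_T (chT τ (n ++ m) D D0)] at hT
      refine BF.psat_mono _ ?_ pol hT
      intro s' hs' pol' d u hmem
      have hcl := bf_atoms φ s hs _ _ hs'
      simp only [ret_val φ hcl]
      exact hmem
    · have hnode : ∀ d, m ++ [d] ∈ σ.Nodes := fun d => Or.inr ⟨m, d, rfl, by
        simp only [DataTree.Nonleaf]; rw [hl]; rfl⟩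
      have hd1 : ∀ d, D0 ∈ data (m ++ [d]) := fun d => ⟨m, List.prefix_append _ _, hd⟩
      have hd2 : ∀ d, D ∈ data (m ++ [d]) := by
        intro d
        obtain ⟨m', h1, h2⟩ := hD
        exact ⟨m', h1.trans (List.prefix_append _ _), h2⟩
      have hgen : ∀ (d u : Bool) (r : (aut φ).Q),
          (r.2 = true ↔ T τ r.1.1 ((n ++ m) ++ [d]) (if u then D0 else D)) →
          (r, if u then D0 else D) ∈ G (m ++ [d]) := by
        intro d u r hr
        refine ⟨hnode d, by cases u; exacts [hd2 d, hd1 d], ?_⟩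
        rw [← List.append_assoc]; exact hr
      intro d
      constructor
      · intro r hr
        have := hgen d true r hr
        cases d <;> exact this
      · intro r hr
        have := hgen d false r hr
        cases d <;> exact this
  · rintro m ⟨hm, hleaf⟩ ⟨⟨s, hs⟩, pol⟩ D ⟨_, _, hT⟩
    change pol = true ↔ T τ s (n ++ m) D at hT
    change pol = false
    cases pol with
    | false => rfl
    | true => exact absurd (T_nonleaf (hT.1 rfl)) hleaf

theorem subtree_finite (τ : DataTree (E ⊕ Att)) (hfin : τ.Finite) (n : Node)
    (hn : (τ.label n).isSome) : (τ.subtree n hn).Finite := by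
  refine Set.Finite.of_injOn (f := fun m => n ++ m) (t := {x | τ.Nonleaf x}) ?_ ?_ hfin
  · intro m hm; exact hm
  · intro a _ b _ hab; simpa using hab

theorem runV_start (τ : DataTree (E ⊕ Att)) (n : Node) (hn : (τ.label n).isSome) (φ : Form E Att)
    (ρ : (aut φ).Run (τ.subtree n hn)) : ∃ D, runV τ n hn φ ρ (.loc φ) true n D := by
  obtain ⟨D, _, h⟩ := ρ.init
  exact ⟨D, at_cl φ, [], by simp, h⟩

end XA

/-- Every forward XPath qualifier `u` over element types `E`
and attribute names `Att` has a finitely equivalent ATRA₁ over `E ⊕ Att`, which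
may moreover be chosen safety equivalent to `u` whenever `u` is safety. -/
theorem xpath_to_atra (E Att : Type) [Fintype E] [Fintype Att] (u : XQual E Att) :
    ∃ M : ATRA (E ⊕ Att),
      (∀ τ : DataTree (E ⊕ Att), IsXMLTree τ → τ.Finite →
        ∀ n : Node, ∀ h : IsElemNode τ n,
          (USem τ u n ↔ τ.subtree n h.isSome ∈ M.Lfin)) ∧
      (USafe true u →
        ∀ τ : DataTree (E ⊕ Att), IsXMLTree τ →
          ∀ n : Node, ∀ h : IsElemNode τ n,
            (USem τ u n ↔ τ.subtree n h.isSome ∈ M.Lsaf)) := by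
  refine ⟨XA.aut (XA.trU u), ?_, ?_⟩
  · intro τ hτ hfin n hn
    constructor
    · intro h
      exact ⟨XA.subtree_finite τ hfin n _,
        XA.exists_run τ hτ n hn _ (fun D => (XA.trU_sem hτ u n D hn).2 h)⟩
    · rintro ⟨_, ρ, hρ⟩
      obtain ⟨D, hD⟩ := XA.runV_start τ n _ _ ρ
      have := (XA.good_finite hτ hfin (XA.runV_post τ n _ _ ρ hρ) _ _ _ _ hD).1 rfl
      exact (XA.trU_sem hτ u n D hn).1 this.2
  · intro hs τ hτ n hn
    constructor
    · intro h
      exact XA.exists_run τ hτ n hn _ (fun D => (XA.trU_sem hτ u n D hn).2 h)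
    · rintro ⟨ρ, hρ⟩
      obtain ⟨D, hD⟩ := XA.runV_start τ n _ _ ρ
      have hV := XA.runV_post τ n _ _ ρ hρ
      have := (XA.EG_loc hV (XA.EG_all hτ hV _ true (XA.trU_safe true u hs)) hn hD).1 rfl
      exact (XA.trU_sem hτ u n D hn).1 this
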